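/- arXiv:2205.11351 — 3 statements merged into one kernel-verified Lean document; each statement's English description precedes it below -/
import Mathlib

section
/- For every integer m ≥ 2 and every λ ∈ (0, π/2), there exist constants C > 0 and r > 0 such that for all y ∈ ℂ with 0 < |y| ≤ r and |arg(y)| ≤ λ, | Σ_{n=1}^∞ log(n)/(e^{ny} − 1) − [ log²(y)/(2y) + (π²/12 − γ²/2)/y − (1/4)log(2π) + (y/12)(log(A) − 1/12) + Σ_{k=2}^{m−1} (B_{2k} y^{2k−1}/k) { (B_{2k}/(2·(2k)!)) (γ − Σ_{j=1}^{2k−1} 1/j + log(2π)) + (−1)^k ζ'(2k)/(2π)^{2k} } ] | ≤ C |y|^{2m−1}. -/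
open Filter Topology MeasureTheory

noncomputable def eulerGamma : ℝ := Real.eulerMascheroniConstant

noncomputable def gamma1 : ℝ :=
  limUnder atTop (fun n : ℕ => ∑ j ∈ Finset.Icc 1 n, Real.log j / j - (Real.log n) ^ 2 / 2)

noncomputable def logGlaisher : ℝ :=
  limUnder atTop (fun n : ℕ =>
    ∑ k ∈ Finset.Icc 1 n, (k : ℝ) * Real.log k
      - ((n : ℝ) ^ 2 / 2 + (n : ℝ) / 2 + 1 / 12) * Real.log n + (n : ℝ) ^ 2 / 4)

lemma gi_integrable {σ c : ℝ} (hσ : 0 < σ) (hc : 0 < c) :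
    IntegrableOn (fun t : ℝ => t ^ (σ - 1) * Real.exp (-c * t)) (Set.Ioi 0) := by
  have := integrableOn_rpow_mul_exp_neg_mul_rpow (p := 1) (s := σ - 1) (b := c) (by linarith) one_pos hc
  simpa using this

lemma gi_norm (a r : ℂ) {t : ℝ} (ht : 0 < t) :
    ‖(t : ℂ) ^ (a - 1) * Complex.exp (-(r * t))‖ = t ^ (a.re - 1) * Real.exp (-r.re * t) := by
  rw [norm_mul, Complex.norm_cpow_eq_rpow_re_of_pos ht, Complex.norm_exp]
  simp

lemma gi_meas (a r : ℂ) :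
    AEStronglyMeasurable (fun t : ℝ => (t : ℂ) ^ (a - 1) * Complex.exp (-(r * t)))
      (volume.restrict (Set.Ioi 0)) := by
  apply ContinuousOn.aestronglyMeasurable _ measurableSet_Ioi
  intro t ht
  apply ContinuousAt.continuousWithinAt
  apply ContinuousAt.mul
  · exact Complex.continuousAt_ofReal_cpow_const _ _ (Or.inr (ne_of_gt ht))
  · fun_prop

lemma gi_int (a r : ℂ) (ha : 0 < a.re) (hr : 0 < r.re) :
    IntegrableOn (fun t : ℝ => (t : ℂ) ^ (a - 1) * Complex.exp (-(r * t))) (Set.Ioi 0) := by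
  apply Integrable.mono' (gi_integrable ha hr) (gi_meas a r)
  filter_upwards [ae_restrict_mem measurableSet_Ioi] with t ht
  rw [gi_norm a r ht]

lemma gi_complex (a : ℂ) (ha : 0 < a.re) (r : ℂ) (hr : 0 < r.re) :
    ∫ t in Set.Ioi (0:ℝ), (t : ℂ) ^ (a - 1) * Complex.exp (-(r * t)) = r ^ (-a) * Complex.Gamma a := by
  set g : ℂ → ℂ := fun r => ∫ t in Set.Ioi (0:ℝ), (t : ℂ) ^ (a - 1) * Complex.exp (-(r * t)) with hg
  set U : Set ℂ := {r | 0 < r.re} with hU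
  have hUo : IsOpen U := isOpen_lt continuous_const Complex.continuous_re
  have hd : DifferentiableOn ℂ g U := by
    intro r0 hr0
    have hr0' : 0 < r0.re := hr0
    have key := hasDerivAt_integral_of_dominated_loc_of_deriv_le
      (μ := volume.restrict (Set.Ioi (0:ℝ)))
      (F := fun r (t:ℝ) => (t : ℂ) ^ (a - 1) * Complex.exp (-(r * t)))
      (F' := fun r (t:ℝ) => (t : ℂ) ^ (a - 1) * (Complex.exp (-(r * t)) * (-t)))
      (x₀ := r0) (s := Metric.ball r0 (r0.re / 2))
      (bound := fun t => t ^ ((a.re + 1) - 1) * Real.exp (-(r0.re/2) * t))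
      (Metric.ball_mem_nhds _ (by linarith))
      (Eventually.of_forall fun r => gi_meas a r) (gi_int a r0 ha hr0)
      (by
        have := (gi_meas a r0).mul
          (Complex.continuous_ofReal.neg.aestronglyMeasurable (μ := volume.restrict (Set.Ioi (0:ℝ))))
        refine this.congr (Eventually.of_forall fun t => ?_)
        simp [mul_assoc])
      (by
        filter_upwards [ae_restrict_mem measurableSet_Ioi] with t ht r hr
        have ht' : 0 < t := ht
        rw [← mul_assoc, norm_mul, gi_norm a r ht]
        have h1 : ‖-(t:ℂ)‖ = t := by simp [abs_of_pos ht']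
        rw [h1, show a.re + 1 - 1 = (a.re - 1) + 1 by ring, Real.rpow_add ht', Real.rpow_one]
        have h2 : r0.re / 2 ≤ r.re := by
          have := Complex.abs_re_le_norm (r - r0)
          rw [Metric.mem_ball, dist_eq_norm] at hr
          have h3 := (abs_lt.mp (lt_of_le_of_lt this hr)).1
          simp at h3; linarith
        have h4 : Real.exp (-r.re * t) ≤ Real.exp (-(r0.re/2) * t) := by
          apply Real.exp_le_exp.mpr; nlinarith
        calc _ = t ^ (a.re - 1) * t * Real.exp (-r.re * t) := by ring
          _ ≤ _ := by gcongr)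
      (gi_integrable (by linarith) (by linarith))
      (by
        refine Eventually.of_forall fun t r _ => ?_
        have : HasDerivAt (fun r : ℂ => -(r * t)) (-(t:ℂ)) r := by
          simpa using ((hasDerivAt_id r).mul_const (t:ℂ)).fun_neg
        exact (this.cexp).const_mul _)
    exact key.2.differentiableAt.differentiableWithinAt
  have hd2 : DifferentiableOn ℂ (fun r : ℂ => r ^ (-a) * Complex.Gamma a) U := by
    intro r hr
    apply DifferentiableAt.differentiableWithinAt
    apply DifferentiableAt.mul_const
    exact differentiableAt_id.cpow_const (Or.inl hr)
  have hpre : IsPreconnected U := (convex_halfSpace_re_gt 0).isPreconnected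
  have hfreq : ∃ᶠ z in 𝓝[≠] (1:ℂ), g z = z ^ (-a) * Complex.Gamma a := by
    have ht : Tendsto (fun n : ℕ => ((1 + 1 / ((n:ℝ) + 1) : ℝ) : ℂ)) atTop (𝓝[≠] (1:ℂ)) := by
      apply tendsto_nhdsWithin_of_tendsto_nhds_of_eventually_within
      · have : Tendsto (fun n : ℕ => (1 + 1 / ((n:ℝ) + 1) : ℝ)) atTop (𝓝 (1 + 0)) :=
          tendsto_one_div_add_atTop_nhds_zero_nat.const_add 1
        rw [add_zero] at this
        exact_mod_cast (Complex.continuous_ofReal.tendsto 1).comp this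
      · refine Eventually.of_forall fun n => ?_
        simp only [Set.mem_compl_iff, Set.mem_singleton_iff]
        have : (0:ℝ) < 1 / ((n:ℝ) + 1) := by positivity
        intro h
        have h' : (1 + 1 / ((n:ℝ) + 1) : ℝ) = 1 := by exact_mod_cast h
        linarith
    refine ht.frequently (Eventually.frequently (Eventually.of_forall fun n => ?_))
    set x : ℝ := 1 + 1 / ((n:ℝ) + 1) with hx
    have hx0 : 0 < x := by positivity
    rw [hg]
    simp only
    rw [Complex.integral_cpow_mul_exp_neg_mul_Ioi ha hx0, one_div, Complex.inv_cpow, Complex.cpow_neg]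
    rw [Complex.arg_ofReal_of_nonneg hx0.le]; exact Real.pi_pos.ne
  exact (hd.analyticOnNhd hUo).eqOn_of_preconnected_of_frequently_eq (hd2.analyticOnNhd hUo) hpre
    (by simp [hU]) hfreq hr

/-- exponential decay of Gamma on strips of the right half plane -/
lemma Gamma_decay {θ : ℝ} (h0 : 0 ≤ θ) (hθ : θ < Real.pi / 2) {a b : ℝ} (ha : 0 < a) :
    ∃ C > 0, ∀ s : ℂ, a ≤ s.re → s.re ≤ b → ‖Complex.Gamma s‖ ≤ C * Real.exp (-θ * |s.im|) := by
  have hcos : 0 < Real.cos θ := Real.cos_pos_of_mem_Ioo ⟨by linarith, hθ⟩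
  set c := Real.cos θ
  refine ⟨(∫ t in Set.Ioi (0:ℝ), (t ^ (a - 1) * Real.exp (-c * t) + t ^ (b - 1) * Real.exp (-c * t))) + 1, ?_, ?_⟩
  · have : 0 ≤ ∫ t in Set.Ioi (0:ℝ), (t ^ (a - 1) * Real.exp (-c * t) + t ^ (b - 1) * Real.exp (-c * t)) := by
      apply setIntegral_nonneg measurableSet_Ioi
      intro t ht
      have : 0 < t := ht
      positivity
    linarith
  intro s hs1 hs2
  have key : ∀ φ : ℝ, |φ| = θ → ‖Complex.Gamma s‖ * Real.exp (φ * s.im) ≤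
      ∫ t in Set.Ioi (0:ℝ), (t ^ (a - 1) * Real.exp (-c * t) + t ^ (b - 1) * Real.exp (-c * t)) := by
    intro φ hφ
    have hre : (Complex.exp (φ * Complex.I)).re = c := by
      rw [Complex.exp_ofReal_mul_I_re, ← Real.cos_abs, hφ]
    have h := gi_complex s (by linarith) (Complex.exp (φ * Complex.I)) (by rw [hre]; exact hcos)
    have hn : ‖Complex.exp (φ * Complex.I) ^ (-s) * Complex.Gamma s‖ = ‖Complex.Gamma s‖ * Real.exp (φ * s.im) := by
      rw [norm_mul, mul_comm]
      congr 1
      have hl : Complex.log (Complex.exp (φ * Complex.I)) = φ * Complex.I := by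
        have h5 := abs_lt.mp (lt_of_eq_of_lt hφ hθ)
        apply Complex.log_exp <;> simp <;> linarith [Real.pi_pos]
      rw [Complex.cpow_def_of_ne_zero (Complex.exp_ne_zero _), hl, Complex.norm_exp]
      simp
    rw [← hn, ← h]
    apply (norm_integral_le_integral_norm _).trans
    apply setIntegral_mono_on
    · exact (gi_int s _ (by linarith) (by rw [hre]; exact hcos)).norm
    · exact (gi_integrable ha hcos).add (gi_integrable (by linarith) hcos)
    · exact measurableSet_Ioi
    · intro t ht
      have ht' : 0 < t := ht
      rw [gi_norm _ _ ht, hre, ← add_mul]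
      gcongr
      rcases le_total t 1 with h1 | h1
      · have := Real.rpow_le_rpow_of_exponent_ge ht' h1 (show a - 1 ≤ s.re - 1 by linarith)
        have : 0 < t ^ (b - 1) := by positivity
        linarith
      · have := Real.rpow_le_rpow_of_exponent_le h1 (show s.re - 1 ≤ b - 1 by linarith)
        have : 0 < t ^ (a - 1) := by positivity
        linarith
  have h2 : ‖Complex.Gamma s‖ * Real.exp (θ * |s.im|) ≤
      ∫ t in Set.Ioi (0:ℝ), (t ^ (a - 1) * Real.exp (-c * t) + t ^ (b - 1) * Real.exp (-c * t)) := by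
    rcases le_total 0 s.im with h | h
    · rw [abs_of_nonneg h]; exact key θ (abs_of_nonneg h0)
    · rw [abs_of_nonpos h]; have := key (-θ) (by rw [abs_neg, abs_of_nonneg h0])
      convert this using 3; ring
  have h3 : Real.exp (θ * |s.im|) * Real.exp (-θ * |s.im|) = 1 := by
    rw [← Real.exp_add]; simp
  calc ‖Complex.Gamma s‖ = (‖Complex.Gamma s‖ * Real.exp (θ * |s.im|)) * Real.exp (-θ * |s.im|) := by
        rw [mul_assoc, h3, mul_one]
    _ ≤ _ := by
        gcongr; linarith

noncomputable def emg (x : ℝ) (s : ℂ) : ℂ :=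
  (x:ℂ)^(1-s) - (s-1)/2*(x:ℂ)^(-s) + (s-1)*s/12*(x:ℂ)^(-s-1)

noncomputable def emB (n : ℕ) (s : ℂ) : ℂ :=
  (s-1)*(((n:ℝ)+2:ℝ):ℂ)^(-s) + emg ((n:ℝ)+2) s - emg ((n:ℝ)+1) s

lemma em_pow_deriv (w v : ℂ) (h : w - 1 = v) (c x : ℝ) (hx : 0 < c + x) :
    HasDerivAt (fun t : ℝ => ((c + t : ℝ) : ℂ) ^ w) (w * ((c + x : ℝ) : ℂ) ^ v) x := by
  have h1 : HasDerivAt (fun z : ℂ => z ^ w) (w * ((c + x : ℝ) : ℂ) ^ (w-1) * 1) ((c+x : ℝ) : ℂ) :=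
    (hasDerivAt_id _).cpow_const (Complex.ofReal_mem_slitPlane.mpr hx)
  have h2 := h1.comp_ofReal
  have h3 := h2.comp_const_add c x
  rw [h, mul_one] at h3
  exact h3

lemma em_integral (n : ℕ) (s : ℂ) :
    emB n s = ∫ t in (0:ℝ)..1, (s-1) * (((t^3 - 3/2*t^2+t/2)/6 : ℝ) : ℂ) *
      (-(s*(s+1)*(s+2)) * (((n:ℝ)+1+t : ℝ) : ℂ)^(-s-3)) := by
  have hpos : ∀ t ∈ Set.uIcc (0:ℝ) 1, (0:ℝ) < (n:ℝ)+1+t := by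
    intro t ht
    rw [Set.uIcc_of_le zero_le_one] at ht
    have := ht.1
    positivity
  have hd : ∀ t ∈ Set.uIcc (0:ℝ) 1, HasDerivAt (fun t : ℝ =>
      (s-1) * ((((t:ℂ)^3 - 3/2*(t:ℂ)^2+(t:ℂ)/2)/6) * (s*(s+1)*(((n:ℝ)+1+t : ℝ) : ℂ)^(-s-2))
        - ((3*(t:ℂ)^2 - 3*(t:ℂ)+1/2)/6) * (-s*(((n:ℝ)+1+t : ℝ) : ℂ)^(-s-1))
        + ((t:ℂ)-1/2) * (((n:ℝ)+1+t : ℝ) : ℂ)^(-s)) + (((n:ℝ)+1+t : ℝ) : ℂ)^(1-s))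
      ((s-1) * (((t^3 - 3/2*t^2+t/2)/6 : ℝ) : ℂ) *
      (-(s*(s+1)*(s+2)) * (((n:ℝ)+1+t : ℝ) : ℂ)^(-s-3))) t := by
    intro t ht
    have h0 := em_pow_deriv (1-s) (-s) (by ring) ((n:ℝ)+1) t (hpos t ht)
    have h1 := em_pow_deriv (-s) (-s-1) (by ring) ((n:ℝ)+1) t (hpos t ht)
    have h2 := em_pow_deriv (-s-1) (-s-2) (by ring) ((n:ℝ)+1) t (hpos t ht)
    have h3 := em_pow_deriv (-s-2) (-s-3) (by ring) ((n:ℝ)+1) t (hpos t ht)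
    have ht1 : HasDerivAt (fun t : ℝ => (t:ℂ)) 1 t := Complex.ofRealCLM.hasDerivAt
    have p0 : HasDerivAt (fun t : ℝ => (((t:ℂ)^3 - 3/2*(t:ℂ)^2+(t:ℂ)/2)/6))
        ((3*(t:ℂ)^2 - 3*(t:ℂ)+1/2)/6) t := by
      have := (((ht1.fun_pow 3).fun_sub ((ht1.fun_pow 2).const_mul (3/2))).fun_add (ht1.div_const 2)).div_const 6
      refine this.congr_deriv ?_
      norm_num
      ring
    have p1 : HasDerivAt (fun t : ℝ => ((3*(t:ℂ)^2 - 3*(t:ℂ)+1/2)/6)) ((t:ℂ) - 1/2) t := by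
      have := ((((ht1.fun_pow 2).const_mul 3).fun_sub (ht1.const_mul 3)).add_const (1/2)).div_const 6
      refine this.congr_deriv ?_
      norm_num
      ring
    have p2 : HasDerivAt (fun t : ℝ => ((t:ℂ) - 1/2)) 1 t := ht1.sub_const _
    have := (((((p0.fun_mul (h3.const_mul (s*(s+1)))).fun_sub (p1.fun_mul (h2.const_mul (-s)))).fun_add
      (p2.fun_mul h1)).const_mul (s-1))).fun_add h0
    refine this.congr_deriv ?_
    push_cast
    ring
  rw [intervalIntegral.integral_eq_sub_of_hasDerivAt hd]
  · rw [emB, emg, emg]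
    push_cast
    rw [show (n:ℂ) + 1 + 1 = (n:ℂ)+2 by ring, show (n:ℂ) + 1 + 0 = (n:ℂ)+1 by ring]
    ring
  · apply ContinuousOn.intervalIntegrable
    intro t ht
    apply ContinuousAt.continuousWithinAt
    have := (em_pow_deriv (-s-3) _ rfl ((n:ℝ)+1) t (hpos t ht)).continuousAt
    apply ContinuousAt.mul
    · fun_prop
    · exact continuousAt_const.mul this

lemma emB_bound (n : ℕ) (s : ℂ) (hs : -3 ≤ s.re) :
    ‖emB n s‖ ≤ ‖(s-1)*(s*(s+1)*(s+2))‖ * ((n:ℝ)+1)^(-s.re-3) := by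
  rw [em_integral]
  have := intervalIntegral.norm_integral_le_of_norm_le_const (a := 0) (b := 1)
    (f := fun t : ℝ => (s-1) * (((t^3 - 3/2*t^2+t/2)/6 : ℝ) : ℂ) *
      (-(s*(s+1)*(s+2)) * (((n:ℝ)+1+t : ℝ) : ℂ)^(-s-3)))
    (C := ‖(s-1)*(s*(s+1)*(s+2))‖ * ((n:ℝ)+1)^(-s.re-3)) ?_
  · simpa using this
  · intro t ht
    rw [Set.uIoc_of_le zero_le_one] at ht
    obtain ⟨h0, h1⟩ := ht
    have hp : |(t^3 - 3/2*t^2+t/2)/6| ≤ 1 := by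
      have e1 : t^2 ≤ 1 := by nlinarith
      have e2 : t^3 ≤ 1 := by nlinarith [mul_nonneg (sq_nonneg t) (sub_nonneg.mpr h1)]
      have e3 : 0 ≤ t^3 := by positivity
      have e4 : 0 ≤ t^2 := by positivity
      rw [abs_le]; constructor <;> linarith
    have hx : (0:ℝ) < (n:ℝ)+1+t := by positivity
    rw [norm_mul, norm_mul, norm_mul, norm_mul, norm_neg, Complex.norm_real, Real.norm_eq_abs,
      Complex.norm_cpow_eq_rpow_re_of_pos hx]
    have hq : ((n:ℝ)+1+t)^((-s-3).re) ≤ ((n:ℝ)+1)^(-s.re-3) := by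
      simp only [Complex.sub_re, Complex.neg_re, Complex.re_ofNat]
      apply Real.rpow_le_rpow_of_nonpos (by positivity) (by linarith) (by linarith)
    calc _ ≤ ‖s-1‖ * 1 * (‖s*(s+1)*(s+2)‖ * ((n:ℝ)+1)^(-s.re-3)) := by gcongr
      _ = _ := by ring

lemma emg_diff (x : ℝ) (hx : 0 < x) : Differentiable ℂ (emg x) := by
  have : (x:ℂ) ≠ 0 := by exact_mod_cast hx.ne'
  unfold emg
  intro s
  have h : ∀ f : ℂ → ℂ, DifferentiableAt ℂ f s → DifferentiableAt ℂ (fun s => (x:ℂ) ^ f s) s :=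
    fun f hf => hf.const_cpow (Or.inl this)
  have h1 := h (fun s => 1 - s) (by fun_prop)
  have h2 := h (fun s => - s) (by fun_prop)
  have h3 := h (fun s => - s-1) (by fun_prop)
  fun_prop

lemma emB_diff (n : ℕ) : Differentiable ℂ (emB n) := by
  have : ((((n:ℝ)+2:ℝ)):ℂ) ≠ 0 := by
    have : (0:ℝ) < (n:ℝ)+2 := by positivity
    exact_mod_cast this.ne'
  have h1 := emg_diff ((n:ℝ)+2) (by positivity)
  have h2 := emg_diff ((n:ℝ)+1) (by positivity)
  have h3 : Differentiable ℂ (fun s : ℂ => (((n:ℝ)+2:ℝ):ℂ)^(-s)) :=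
    fun s => (differentiableAt_id.neg).const_cpow (Or.inl this)
  unfold emB
  fun_prop

lemma em_partial (N : ℕ) (s : ℂ) : (s - 1) + emg 1 s + ∑ n ∈ Finset.range N, emB n s =
    (s-1) * ∑ n ∈ Finset.range (N+1), (((n:ℝ)+1:ℝ):ℂ)^(-s) + emg ((N:ℝ)+1) s := by
  induction N with
  | zero => simp
  | succ N ih =>
    rw [Finset.sum_range_succ, ← add_assoc, ih, Finset.sum_range_succ _ (N+1), emB]
    push_cast
    rw [show (N:ℂ)+1+1 = N+2 by ring, show (N:ℝ)+1+1 = N+2 by ring]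
    ring

lemma em_summable (σ : ℝ) (hs : -2 < σ) : Summable (fun n : ℕ => ((n:ℝ)+1)^(-σ-3)) := by
  have := (summable_nat_add_iff 1).mpr (Real.summable_nat_rpow.mpr (show -σ-3 < -1 by linarith))
  simpa using this

lemma em_hasSum {s : ℂ} (hs : 1 < s.re) :
    HasSum (fun n => emB n s) (riemannZeta₁ s - (s-1) - emg 1 s) := by
  have hs1 : s ≠ 1 := by rintro rfl; simp at hs
  have hsum : Summable (fun n => emB n s) := by
    apply Summable.of_norm_bounded _ (fun n => emB_bound n s (by linarith))
    exact (em_summable s.re (by linarith)).mul_left _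
  refine hsum.hasSum_iff_tendsto_nat.mpr ?_
  have e : ∀ N : ℕ, ∑ n ∈ Finset.range N, emB n s =
     ((s-1) * ∑ n ∈ Finset.range (N+1), (((n:ℝ)+1:ℝ):ℂ)^(-s) + emg ((N:ℝ)+1) s) - (s-1) - emg 1 s := by
    intro N; rw [← em_partial]; ring
  simp_rw [e]
  apply Tendsto.sub_const
  apply Tendsto.sub_const
  have hz : riemannZeta₁ s = (s-1) * riemannZeta s + 0 := by
    rw [riemannZeta_eq_inv_sub_mul hs1, add_zero, mul_inv_cancel_left₀ (sub_ne_zero.mpr hs1)]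
  rw [hz]
  have hz2 := zeta_eq_tsum_one_div_nat_add_one_cpow hs
  have hsm : Summable (fun n : ℕ => 1 / ((n:ℂ)+1)^s) := by
    have := (summable_nat_add_iff 1).mpr (Complex.summable_one_div_nat_cpow.mpr hs)
    simpa using this
  have ht := hsm.hasSum.tendsto_sum_nat
  rw [← hz2] at ht
  have hpow : ∀ w : ℂ, w.re < 0 → Tendsto (fun N : ℕ => (((N:ℝ)+1 : ℝ):ℂ)^w) atTop (𝓝 0) := by
    intro w hw
    rw [tendsto_zero_iff_norm_tendsto_zero]
    have : ∀ N : ℕ, ‖(((N:ℝ)+1 : ℝ):ℂ)^w‖ = ((N:ℝ)+1)^(-(-w.re)) := by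
      intro N
      rw [Complex.norm_cpow_eq_rpow_re_of_pos (by positivity), neg_neg]
    simp_rw [this]
    exact (tendsto_rpow_neg_atTop (by linarith)).comp
      (tendsto_atTop_add_const_right _ _ tendsto_natCast_atTop_atTop)
  apply Tendsto.add
  · apply Tendsto.const_mul
    refine (ht.comp (tendsto_add_atTop_nat 1)).congr fun N => ?_
    simp only [Function.comp]
    apply Finset.sum_congr rfl
    intro n _
    rw [Complex.cpow_neg, one_div]; push_cast; rfl
  · unfold emg
    have h1 := hpow (1-s) (by simp; linarith)
    have h2 := (hpow (-s) (by simp; linarith)).const_mul ((s-1)/2)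
    have h3 := (hpow (-s-1) (by simp; linarith)).const_mul ((s-1)*s/12)
    simpa using (h1.sub h2).add h3

lemma em_bound_loc (s0 : ℂ) (hs : -2 < s0.re) : ∃ δ > 0, ∃ u : ℕ → ℝ, Summable u ∧
    ∀ i, ∀ s ∈ Metric.ball s0 δ, ‖emB i s‖ ≤ u i := by
  set δ := (s0.re + 2)/2 with hδ
  have hδ0 : 0 < δ := by rw [hδ]; linarith
  have hcont : Continuous (fun s : ℂ => ‖(s-1)*(s*(s+1)*(s+2))‖) := by fun_prop
  obtain ⟨M, hM⟩ := (isCompact_closedBall s0 δ).exists_bound_of_continuousOn hcont.continuousOn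
  refine ⟨δ, hδ0, fun n => M * ((n:ℝ)+1)^(-(s0.re - δ)-3), ?_, ?_⟩
  · exact (em_summable _ (by rw [hδ]; linarith)).mul_left _
  · intro n s hs'
    have h1 := hM s (Metric.ball_subset_closedBall hs')
    rw [norm_norm] at h1
    have h2 : s0.re - δ ≤ s.re := by
      have := Complex.abs_re_le_norm (s - s0)
      rw [Metric.mem_ball, dist_eq_norm] at hs'
      have h3 := (abs_lt.mp (lt_of_le_of_lt this hs')).1
      simp at h3; linarith
    refine (emB_bound n s (by linarith)).trans ?_
    have h0 := (norm_nonneg _).trans h1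
    have h4 : ((n:ℝ)+1)^(-s.re-3) ≤ ((n:ℝ)+1)^(-(s0.re - δ)-3) := by
      apply Real.rpow_le_rpow_of_exponent_le
      · have : (0:ℝ) ≤ n := by positivity
        linarith
      · linarith
    exact mul_le_mul h1 h4 (by positivity) h0

lemma em_zeta1 {s : ℂ} (hs : -2 < s.re) :
    riemannZeta₁ s = (s-1) + emg 1 s + ∑' n, emB n s := by
  set U : Set ℂ := {s | -2 < s.re} with hU
  have hUo : IsOpen U := isOpen_lt continuous_const Complex.continuous_re
  have hd : DifferentiableOn ℂ (fun s => (s-1) + emg 1 s + ∑' n, emB n s) U := by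
    intro s0 hs0
    obtain ⟨δ, hδ, u, hu, hb⟩ := em_bound_loc s0 hs0
    have := Complex.differentiableOn_tsum_of_summable_norm hu (fun i => (emB_diff i).differentiableOn)
      Metric.isOpen_ball hb
    have := this.differentiableAt (Metric.ball_mem_nhds _ hδ)
    have h2 := (emg_diff 1 one_pos) s0
    apply DifferentiableAt.differentiableWithinAt
    fun_prop
  have hpre : IsPreconnected U := (convex_halfSpace_re_gt _).isPreconnected
  refine (differentiable_riemannZeta₁.differentiableOn.analyticOnNhd hUo).eqOn_of_preconnected_of_eventuallyEq
    (hd.analyticOnNhd hUo) hpre (z₀ := 2) (by simp [hU]) ?_ hs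
  have : {s : ℂ | 1 < s.re} ∈ 𝓝 (2:ℂ) :=
    (isOpen_lt continuous_const Complex.continuous_re).mem_nhds (by simp)
  filter_upwards [this] with s hs
  rw [(em_hasSum hs).tsum_eq]; ring

lemma em_deriv_tendsto {s : ℂ} (hs : -2 < s.re) :
    Tendsto (fun N : ℕ => deriv (fun s => (s-1) * ∑ n ∈ Finset.range (N+1), (((n:ℝ)+1:ℝ):ℂ)^(-s)
      + emg ((N:ℝ)+1) s) s) atTop (𝓝 (deriv riemannZeta₁ s)) := by
  obtain ⟨δ, hδ, u, hu, hb⟩ := em_bound_loc s hs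
  have h1 := Complex.hasSum_deriv_of_summable_norm hu (fun i => (emB_diff i).differentiableOn)
      Metric.isOpen_ball hb (Metric.mem_ball_self hδ)
  have hd := (Complex.differentiableOn_tsum_of_summable_norm hu (fun i => (emB_diff i).differentiableOn)
      Metric.isOpen_ball hb).differentiableAt (Metric.ball_mem_nhds _ hδ)
  have h2 := (emg_diff 1 one_pos) s
  have h3 : deriv riemannZeta₁ s = deriv (fun s => (s-1) + emg 1 s) s + deriv (fun s => ∑' n, emB n s) s := by
    rw [← deriv_fun_add (by fun_prop) hd]
    apply Filter.EventuallyEq.deriv_eq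
    have : {s : ℂ | -2 < s.re} ∈ 𝓝 s :=
      (isOpen_lt continuous_const Complex.continuous_re).mem_nhds hs
    filter_upwards [this] with s hs
    exact em_zeta1 hs
  rw [h3]
  refine (h1.tendsto_sum_nat.const_add _).congr fun N => ?_
  rw [← deriv_fun_sum (fun i _ => (emB_diff i) s), ← deriv_fun_add (by fun_prop)
    (DifferentiableAt.fun_sum fun i _ => (emB_diff i) s)]
  congr 1
  ext s
  exact em_partial N s

lemma gl_cpow_deriv (x : ℝ) (hx : 0 < x) (f : ℂ → ℂ) (f' s : ℂ) (hf : HasDerivAt f f' s) :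
    HasDerivAt (fun s => (x:ℂ) ^ f s) ((x:ℂ) ^ f s * (Real.log x : ℂ) * f') s := by
  have := hf.const_cpow (c := (x:ℂ)) (Or.inl (by exact_mod_cast hx.ne'))
  rwa [← Complex.ofReal_log hx.le] at this

noncomputable def glSeq (n : ℕ) : ℝ := ∑ k ∈ Finset.Icc 1 n, (k : ℝ) * Real.log k
      - ((n : ℝ) ^ 2 / 2 + (n : ℝ) / 2 + 1 / 12) * Real.log n + (n : ℝ) ^ 2 / 4

lemma gl_shift (M : ℕ) : (∑ k ∈ Finset.Icc 1 M, (k : ℝ) * Real.log k) =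
    ∑ n ∈ Finset.range M, ((n:ℝ)+1) * Real.log ((n:ℝ)+1) := by
  induction M with
  | zero => simp
  | succ N ih => rw [Finset.sum_Icc_succ_top (by omega), ih, Finset.sum_range_succ]; push_cast; rfl

lemma gl_sum_id (N : ℕ) : (∑ n ∈ Finset.range (N+1), ((n:ℂ)+1)) = ((N:ℂ)+1)*((N:ℂ)+2)/2 := by
  induction N with
  | zero => norm_num
  | succ N ih => rw [Finset.sum_range_succ, ih]; push_cast; ring

lemma gl_deriv (N : ℕ) : deriv (fun s => (s-1) * ∑ n ∈ Finset.range (N+1), (((n:ℝ)+1:ℝ):ℂ)^(-s)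
      + emg ((N:ℝ)+1) s) (-1) = ((2 * glSeq (N+1) - 1/4 : ℝ) : ℂ) := by
  apply HasDerivAt.deriv
  have hid : HasDerivAt (fun s : ℂ => s) 1 (-1) := hasDerivAt_id _
  have hneg : HasDerivAt (fun s : ℂ => -s) (-1) (-1) := hid.fun_neg
  have hs1 : HasDerivAt (fun s : ℂ => s - 1) 1 (-1) := hid.sub_const 1
  have h1 : HasDerivAt (fun s : ℂ => ∑ n ∈ Finset.range (N+1), (((n:ℝ)+1:ℝ):ℂ)^(-s))
      (∑ n ∈ Finset.range (N+1), (((n:ℝ)+1:ℝ):ℂ)^(-(-1:ℂ)) * (Real.log ((n:ℝ)+1) : ℂ) * (-1)) (-1) :=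
    HasDerivAt.fun_sum fun n _ => gl_cpow_deriv _ (by positivity) _ _ _ hneg
  have hN : (0:ℝ) < (N:ℝ)+1 := by positivity
  have g1 := gl_cpow_deriv ((N:ℝ)+1) hN (fun s => 1 - s) _ (-1) (hid.const_sub 1)
  have g2 := gl_cpow_deriv ((N:ℝ)+1) hN (fun s => - s) _ (-1) hneg
  have g3 := gl_cpow_deriv ((N:ℝ)+1) hN (fun s => - s - 1) _ (-1) (hneg.sub_const 1)
  have := (hs1.fun_mul h1).fun_add ((g1.fun_sub ((hs1.div_const 2).fun_mul g2)).fun_add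
    (((hs1.fun_mul hid).div_const 12).fun_mul g3))
  unfold emg
  refine this.congr_deriv ?_
  have hx2 : (((N:ℝ)+1:ℝ):ℂ) ^ (1 - (-1):ℂ) = ((N:ℂ)+1)^2 := by
    rw [show (1 - (-1):ℂ) = ((2:ℕ):ℂ) by norm_num, Complex.cpow_natCast]; push_cast; rfl
  have hx0 : (((N:ℝ)+1:ℝ):ℂ) ^ (-(-1) - 1:ℂ) = 1 := by
    rw [show (-(-1) - 1:ℂ) = 0 by norm_num, Complex.cpow_zero]
  rw [hx2, hx0]
  simp only [neg_neg, Complex.cpow_one]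
  have hsum2 : ∑ n ∈ Finset.range (N+1), (((n:ℝ)+1:ℝ):ℂ) * (Real.log ((n:ℝ)+1) : ℂ) * (-1)
      = - ((∑ k ∈ Finset.Icc 1 (N+1), (k : ℝ) * Real.log k : ℝ) : ℂ) := by
    rw [← Finset.sum_mul, mul_neg_one, gl_shift (N+1)]
    push_cast
    rfl
  rw [hsum2]
  have h3 := gl_sum_id N
  push_cast at h3 ⊢
  rw [h3, glSeq]
  push_cast
  ring

lemma zeta_deriv_neg_one : deriv riemannZeta (-1) = 1/12 - (logGlaisher : ℂ) := by
  have h := em_deriv_tendsto (s := -1) (by norm_num)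
  simp_rw [gl_deriv] at h
  set L := deriv riemannZeta₁ (-1)
  have hre := (Complex.continuous_re.tendsto L).comp h
  simp only [Function.comp_def, Complex.ofReal_re] at hre
  have hL : L = (L.re : ℂ) := tendsto_nhds_unique h ((Complex.continuous_ofReal.tendsto _).comp hre)
  have h2 : Tendsto (fun N => glSeq (N+1)) atTop (𝓝 ((L.re + 1/4)/2)) := by
    have := (hre.add_const (1/4)).div_const 2
    refine this.congr fun N => ?_
    ring
  have h3 : logGlaisher = (L.re + 1/4)/2 := by
    have := (tendsto_add_atTop_iff_nat 1).mp h2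
    exact this.limUnder_eq
  have h4 := deriv_riemannZeta_eq_neg_inv_sub_sq_mul_add (s := -1) (by norm_num)
  have h5 := riemannZeta_eq_inv_sub_mul (s := -1) (by norm_num)
  have h6 := riemannZeta_neg_nat_eq_bernoulli 1
  norm_num [bernoulli_eq_bernoulli'_of_ne_one] at h6
  rw [h6] at h5
  rw [h4, h3]
  push_cast
  rw [← hL]
  have h7 : riemannZeta₁ (-1) = 1/6 := by
    have : riemannZeta₁ (-1) = (-2) * ((-1-1)⁻¹ * riemannZeta₁ (-1)) := by ring
    rw [this, ← h5]; norm_num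
  rw [h7]
  norm_num
  ring

lemma zeta_deriv_odd (k : ℕ) (hk : 1 ≤ k) :
    deriv riemannZeta (1 - 2 * (k:ℂ)) = riemannZeta (1 - 2 * (k:ℂ)) *
      (Complex.log (2 * (Real.pi : ℂ)) + (eulerGamma : ℂ) - (∑ j ∈ Finset.Icc 1 (2 * k - 1), 1 / (j : ℂ)))
      - 2 * (-1)^k * ((2 * k - 1).factorial : ℂ) * deriv riemannZeta (2 * (k:ℂ)) / (2 * (Real.pi : ℂ)) ^ (2 * k) := by
  have hkc : (2 * (k:ℂ)) = (((2 * k - 1 : ℕ) : ℂ) + 1) := by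
    have : 2 * k = (2 * k - 1) + 1 := by omega
    exact_mod_cast this
  have hk1 : (2 * (k:ℂ)) ≠ 1 := by
    have : 2 * k ≠ 1 := by omega
    exact_mod_cast this
  have hpi : (2 * (Real.pi : ℂ)) ≠ 0 := by
    simp [Real.pi_ne_zero]
  set q : ℕ := 2 * k - 1 with hq
  have hid : HasDerivAt (fun w : ℂ => w) 1 (2 * (k:ℂ)) := hasDerivAt_id _
  have hG : HasDerivAt Complex.Gamma _ (2 * (k:ℂ)) := hkc ▸ Complex.hasDerivAt_Gamma_nat q
  have hGv : Complex.Gamma (2 * (k:ℂ)) = (q.factorial : ℂ) := by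
    rw [hkc]; exact Complex.Gamma_nat_eq_factorial q
  have hP : HasDerivAt (fun w : ℂ => (2 * (Real.pi : ℂ)) ^ (-w)) _ (2 * (k:ℂ)) :=
    hid.fun_neg.const_cpow (Or.inl hpi)
  have hC : HasDerivAt (fun w : ℂ => Complex.cos (Real.pi * w / 2)) _ (2 * (k:ℂ)) :=
    ((hid.const_mul (Real.pi : ℂ)).div_const 2).ccos
  have hZ : HasDerivAt riemannZeta (deriv riemannZeta (2 * (k:ℂ))) (2 * (k:ℂ)) :=
    (differentiableAt_riemannZeta hk1).hasDerivAt
  have hne : (1 - 2 * (k:ℂ)) ≠ 1 := by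
    have : (k:ℂ) ≠ 0 := by exact_mod_cast (by omega : k ≠ 0)
    simpa using this
  have hL : HasDerivAt (fun w : ℂ => riemannZeta (1 - w)) (deriv riemannZeta (1 - 2 * (k:ℂ)) * (-1)) (2 * (k:ℂ)) :=
    HasDerivAt.comp (2 * (k:ℂ)) (differentiableAt_riemannZeta hne).hasDerivAt (hid.const_sub 1)
  have hR := (((hP.const_mul 2).fun_mul hG).fun_mul hC).fun_mul hZ
  have hev : (fun w : ℂ => riemannZeta (1 - w)) =ᶠ[𝓝 (2 * (k:ℂ))]
      (fun w => 2 * (2 * (Real.pi : ℂ)) ^ (-w) * Complex.Gamma w * Complex.cos (Real.pi * w / 2) * riemannZeta w) := by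
    have h1 : {w : ℂ | 1 < w.re} ∈ 𝓝 (2 * (k:ℂ)) := by
      apply (isOpen_lt continuous_const Complex.continuous_re).mem_nhds
      simp only [Set.mem_setOf_eq, Complex.mul_re, Complex.re_ofNat, Complex.natCast_re, Complex.im_ofNat, Complex.natCast_im]
      have : (1:ℝ) ≤ k := by exact_mod_cast hk
      linarith
    filter_upwards [h1] with w hw
    have hw' : 1 < w.re := hw
    apply riemannZeta_one_sub
    · rintro n rfl
      simp at hw'
      have : (0:ℝ) ≤ n := by positivity
      linarith
    · rintro rfl
      simp at hw'
  have heq := hL.unique (hR.congr_of_eventuallyEq hev)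
  have hval := hev.self_of_nhds
  simp only at hval heq
  have hcos : Complex.cos (Real.pi * (2 * (k:ℂ)) / 2) = (-1)^k := by
    rw [show (Real.pi * (2 * (k:ℂ)) / 2 : ℂ) = ((k * Real.pi : ℝ) : ℂ) by push_cast; ring, ← Complex.ofReal_cos,
      Real.cos_nat_mul_pi]
    push_cast; rfl
  have hsin : Complex.sin (Real.pi * (2 * (k:ℂ)) / 2) = 0 := by
    rw [show (Real.pi * (2 * (k:ℂ)) / 2 : ℂ) = ((k * Real.pi : ℝ) : ℂ) by push_cast; ring, ← Complex.ofReal_sin,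
      Real.sin_nat_mul_pi]
    simp
  have hpw : (2 * (Real.pi : ℂ)) ^ (-(2 * (k:ℂ))) = ((2 * (Real.pi : ℂ)) ^ (2 * k))⁻¹ := by
    rw [Complex.cpow_neg, show (2 * (k:ℂ)) = ((2 * k : ℕ) : ℂ) by push_cast; rfl, Complex.cpow_natCast]
  have hharm : ((harmonic q : ℚ) : ℂ) = ∑ j ∈ Finset.Icc 1 q, 1 / (j : ℂ) := by
    rw [harmonic_eq_sum_Icc]; push_cast; simp
  rw [hcos, hpw, hGv] at hval
  rw [hsin, hcos, hpw, hGv, hharm] at heq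
  rw [hval]
  have : deriv riemannZeta (1 - 2 * (k:ℂ)) = -(deriv riemannZeta (1 - 2 * (k:ℂ)) * (-1)) := by ring
  rw [this, heq, eulerGamma]
  ring

lemma zeta_odd_val (k : ℕ) (hk : 1 ≤ k) : riemannZeta (1 - 2 * (k:ℂ)) = -(bernoulli (2 * k) : ℂ) / (2 * k) := by
  have h := riemannZeta_neg_nat_eq_bernoulli (2 * k - 1)
  have e : 2 * k - 1 + 1 = 2 * k := by omega
  have hc : ((2 * k - 1 : ℕ) : ℂ) = 2 * k - 1 := by
    rw [Nat.cast_sub (by omega)]; push_cast; rfl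
  have ho : Odd (2 * k - 1) := ⟨k - 1, by omega⟩
  rw [e, hc, ho.neg_one_pow] at h
  rw [show (1 - 2 * (k:ℂ)) = -(2 * (k:ℂ) - 1) by ring, h]
  ring

lemma residue_odd (k : ℕ) (hk : 1 ≤ k) :
    deriv riemannZeta (1 - 2 * (k:ℂ)) * riemannZeta (1 - 2 * (k:ℂ)) / ((2 * k - 1).factorial : ℂ)
     = ((bernoulli (2 * k) : ℂ) / (k : ℂ)) *
                ((bernoulli (2 * k) : ℂ) / (2 * (Nat.factorial (2 * k) : ℂ))
                    * ((eulerGamma : ℂ) - (∑ j ∈ Finset.Icc 1 (2 * k - 1), 1 / (j : ℂ))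
                      + Complex.log (2 * (Real.pi : ℂ)))
                  + (-1) ^ k * deriv riemannZeta (2 * (k : ℂ)) / (2 * (Real.pi : ℂ)) ^ (2 * k)) := by
  rw [zeta_deriv_odd k hk, zeta_odd_val k hk]
  have hf : (Nat.factorial (2 * k) : ℂ) = 2 * k * ((2 * k - 1).factorial : ℂ) := by
    have : 2 * k = (2 * k - 1) + 1 := by omega
    conv_lhs => rw [this, Nat.factorial_succ, ← this]
    push_cast; ring
  rw [hf]
  have h1 : (k:ℂ) ≠ 0 := by exact_mod_cast (by omega : k ≠ 0)
  have h2 : ((2 * k - 1).factorial : ℂ) ≠ 0 := by exact_mod_cast Nat.factorial_ne_zero _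
  have hpi : (Real.pi : ℂ) ≠ 0 := by simp [Real.pi_ne_zero]
  field_simp
  ring

lemma Gamma_strip_aux {θ : ℝ} (h0 : 0 ≤ θ) (hθ : θ < Real.pi / 2) (N : ℕ) : ∀ a b : ℝ, -(N:ℝ) < a →
    ∃ C > 0, ∀ s : ℂ, a ≤ s.re → s.re ≤ b → 1 ≤ |s.im| →
      ‖Complex.Gamma s‖ ≤ C * Real.exp (-θ * |s.im|) := by
  induction N with
  | zero =>
    intro a b ha
    obtain ⟨C, hC, h⟩ := Gamma_decay h0 hθ (a := a) (b := b) (by simpa using ha)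
    exact ⟨C, hC, fun s h1 h2 _ => h s h1 h2⟩
  | succ N ih =>
    intro a b ha
    obtain ⟨C, hC, h⟩ := ih (a+1) (b+1) (by push_cast at ha; linarith)
    refine ⟨C, hC, fun s h1 h2 h3 => ?_⟩
    have hs : s ≠ 0 := by rintro rfl; simp at h3; linarith
    have h4 := h (s+1) (by simpa using h1) (by simpa using h2) (by simpa using h3)
    rw [Complex.Gamma_add_one s hs, norm_mul] at h4
    have h5 : 1 ≤ ‖s‖ := h3.trans (Complex.abs_im_le_norm s)
    have h6 : (s+1).im = s.im := by simp
    rw [h6] at h4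
    refine le_trans ?_ h4
    exact le_mul_of_one_le_left (norm_nonneg _) h5

lemma Gamma_strip {θ : ℝ} (h0 : 0 ≤ θ) (hθ : θ < Real.pi / 2) (a b : ℝ) :
    ∃ C > 0, ∀ s : ℂ, a ≤ s.re → s.re ≤ b → 1 ≤ |s.im| →
      ‖Complex.Gamma s‖ ≤ C * Real.exp (-θ * |s.im|) := by
  obtain ⟨N, hN⟩ := exists_nat_gt (-a)
  exact Gamma_strip_aux h0 hθ N a b (by linarith)

lemma norm_cos_le (z : ℂ) : ‖Complex.cos z‖ ≤ Real.exp |z.im| := by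
  rw [Complex.cos]
  have h1 : ‖Complex.exp (z * Complex.I)‖ ≤ Real.exp |z.im| := by
    rw [Complex.norm_exp]; simp [neg_le_abs]
  have h2 : ‖Complex.exp (-z * Complex.I)‖ ≤ Real.exp |z.im| := by
    rw [Complex.norm_exp]; simp [le_abs_self]
  rw [norm_div, Complex.norm_ofNat]
  have := norm_add_le (Complex.exp (z * Complex.I)) (Complex.exp (-z * Complex.I))
  linarith

lemma zeta_strip_right {ε : ℝ} (hε : 0 < ε) (b : ℝ) :
    ∃ C > 0, ∀ s : ℂ, -1 ≤ s.re → s.re ≤ b → 1 ≤ |s.im| →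
      ‖riemannZeta s‖ ≤ C * Real.exp (ε * |s.im|) := by
  set S := ∑' n : ℕ, ((n:ℝ)+1)^(-(-1:ℝ)-3) with hS
  have hSs := em_summable (-1) (by norm_num)
  have hS0 : 0 ≤ S := tsum_nonneg fun n => by positivity
  set R := 3 + |b| with hR
  refine ⟨(S + 4) * (24 / ε^4 * Real.exp (ε * R)), by positivity, fun s h1 h2 h3 => ?_⟩
  have hs1 : s ≠ 1 := by rintro rfl; simp at h3; linarith
  set X := R + |s.im| with hX
  have hns : ‖s‖ ≤ 1 + |b| + |s.im| := by
    have := Complex.norm_le_abs_re_add_abs_im s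
    have h4 : |s.re| ≤ 1 + |b| := by
      rw [abs_le]; constructor
      · have := abs_nonneg b; linarith
      · have := le_abs_self b; linarith
    linarith
  have x0 : ‖s‖ ≤ X := by rw [hX, hR]; linarith
  have xm : ‖s-1‖ ≤ X := by
    have := norm_sub_le s 1; rw [norm_one] at this; rw [hX, hR]; linarith
  have x1 : ‖s+1‖ ≤ X := by
    have := norm_add_le s 1; rw [norm_one] at this; rw [hX, hR]; linarith
  have x2 : ‖s+2‖ ≤ X := by
    have := norm_add_le s 2; rw [Complex.norm_ofNat] at this; rw [hX, hR]; linarith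
  have hX1 : 1 ≤ X := by rw [hX, hR]; have := abs_nonneg b; linarith
  have hX0 : 0 ≤ X := by linarith
  have p1 : 1 ≤ X^4 := one_le_pow₀ hX1
  have p2 : X ≤ X^4 := by simpa using pow_le_pow_right₀ hX1 (show 1 ≤ 4 by norm_num)
  have p3 : X^2 ≤ X^4 := pow_le_pow_right₀ hX1 (show 2 ≤ 4 by norm_num)
  have hpoly : ‖(s-1)*(s*(s+1)*(s+2))‖ ≤ X^4 := by
    rw [norm_mul, norm_mul, norm_mul]
    calc _ ≤ X * (X * X * X) := by gcongr
      _ = _ := by ring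
  have hz1 : ‖riemannZeta₁ s‖ ≤ (S+4) * X^4 := by
    rw [em_zeta1 (by linarith)]
    have t1 : ‖∑' n, emB n s‖ ≤ X^4 * S := by
      have hb : ∀ n, ‖emB n s‖ ≤ X^4 * ((n:ℝ)+1)^(-(-1:ℝ)-3) := by
        intro n
        refine (emB_bound n s (by linarith)).trans ?_
        have h4 : ((n:ℝ)+1)^(-s.re-3) ≤ ((n:ℝ)+1)^(-(-1:ℝ)-3) := by
          apply Real.rpow_le_rpow_of_exponent_le
          · have : (0:ℝ) ≤ n := by positivity
            linarith
          · linarith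
        gcongr
      rw [hS, ← tsum_mul_left]
      exact tsum_of_norm_bounded ((hSs.mul_left _).hasSum) hb
    have t2 : ‖emg 1 s‖ ≤ 3 * X^4 := by
      rw [emg]
      simp only [Complex.ofReal_one, Complex.one_cpow, mul_one]
      have e1 : ‖(s-1)/2‖ ≤ X := by
        rw [norm_div, Complex.norm_ofNat]
        linarith [norm_nonneg (s-1)]
      have e2 : ‖(s-1)*s/12‖ ≤ X^2 := by
        rw [norm_div, norm_mul, Complex.norm_ofNat]
        have : ‖s-1‖*‖s‖ ≤ X * X := by gcongr
        have : 0 ≤ ‖s-1‖*‖s‖ := by positivity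
        nlinarith
      have := norm_add_le (1 - (s-1)/2) ((s-1)*s/12)
      have := norm_sub_le 1 ((s-1)/2)
      rw [norm_one] at this
      linarith
    have := norm_add₃_le (a := s-1) (b := emg 1 s) (c := ∑' n, emB n s)
    nlinarith
  have hz : ‖riemannZeta s‖ ≤ ‖riemannZeta₁ s‖ := by
    rw [riemannZeta_eq_inv_sub_mul hs1, norm_mul, norm_inv]
    have : 1 ≤ ‖s-1‖ := by
      have := Complex.abs_im_le_norm (s-1)
      simp at this; linarith
    have := inv_le_one_of_one_le₀ this
    exact mul_le_of_le_one_left (norm_nonneg _) this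
  have hexp : X^4 ≤ 24 / ε^4 * Real.exp (ε * R) * Real.exp (ε * |s.im|) := by
    have := Real.pow_div_factorial_le_exp (ε * X) (by positivity) 4
    have e : Real.exp (ε * X) = Real.exp (ε * R) * Real.exp (ε * |s.im|) := by
      rw [← Real.exp_add, hX]; ring_nf
    rw [mul_assoc, ← e]
    have h24 : ((Nat.factorial 4 : ℕ) : ℝ) = 24 := by norm_num [Nat.factorial]
    rw [h24, div_le_iff₀ (by norm_num), mul_pow] at this
    rw [div_mul_eq_mul_div, le_div_iff₀ (by positivity)]
    linarith
  calc _ ≤ (S+4) * X^4 := hz.trans hz1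
    _ ≤ (S+4) * (24 / ε^4 * Real.exp (ε * R) * Real.exp (ε * |s.im|)) := by gcongr
    _ = _ := by ring

lemma zeta_strip {ε : ℝ} (hε : 0 < ε) (a b : ℝ) :
    ∃ C > 0, ∀ s : ℂ, a ≤ s.re → s.re ≤ b → 1 ≤ |s.im| →
      ‖riemannZeta s‖ ≤ C * Real.exp (ε * |s.im|) := by
  obtain ⟨C1, hC1, h1⟩ := zeta_strip_right hε b
  obtain ⟨C2, hC2, h2⟩ := zeta_strip_right (half_pos hε) (1 - a)
  set θ := max 0 (Real.pi/2 - ε/2) with hθ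
  obtain ⟨C3, hC3, h3⟩ := Gamma_strip (θ := θ) (le_max_left _ _)
    (max_lt (by positivity) (by linarith)) 2 (1 - a)
  refine ⟨C1 + 2 * C3 * C2, by positivity, fun s ha hb hs => ?_⟩
  rcases le_total (-1) s.re with h | h
  · refine (h1 s h hb hs).trans ?_
    gcongr
    have : 0 < 2 * C3 * C2 := by positivity
    linarith
  · set w := 1 - s with hw
    have hwre : w.re = 1 - s.re := by simp [hw]
    have hwim : w.im = - s.im := by simp [hw]
    have habs : |w.im| = |s.im| := by rw [hwim, abs_neg]
    have hsw : s = 1 - w := by rw [hw]; ring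
    have hf := riemannZeta_one_sub (s := w) (by
      rintro n hn
      have h0 : w.im = 0 := by rw [hn]; simp
      rw [h0, abs_zero] at habs; linarith) (by
      intro hn
      have h0 : w.im = 0 := by rw [hn]; simp
      rw [h0, abs_zero] at habs; linarith)
    have e1 := h2 w (by linarith) (by linarith) (by rw [habs]; exact hs)
    have e2 := h3 w (by linarith) (by linarith) (by rw [habs]; exact hs)
    have e3 := norm_cos_le (Real.pi * w / 2)
    have e4 : |(Real.pi * w / 2 : ℂ).im| = Real.pi / 2 * |s.im| := by
      rw [show (Real.pi * w / 2 : ℂ) = ((Real.pi / 2 : ℝ) : ℂ) * w by push_cast; ring, Complex.im_ofReal_mul,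
        abs_mul, habs, abs_of_pos (by positivity)]
    have e5 : ‖(2 * (Real.pi:ℂ)) ^ (-w)‖ ≤ 1 := by
      rw [show (2 * (Real.pi:ℂ)) = ((2 * Real.pi : ℝ) : ℂ) by push_cast; rfl,
        Complex.norm_cpow_eq_rpow_re_of_pos (by positivity)]
      apply Real.rpow_le_one_of_one_le_of_nonpos
      · linarith [Real.pi_gt_three]
      · simp; linarith
    rw [e4] at e3
    rw [habs] at e1 e2
    rw [hsw, hf]
    simp only [norm_mul, Complex.norm_ofNat]
    have him : |(1 - w).im| = |s.im| := by rw [← hsw]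
    rw [him]
    set t := |s.im|
    calc 2 * ‖(2 * (Real.pi:ℂ)) ^ (-w)‖ * ‖Complex.Gamma w‖ * ‖Complex.cos (Real.pi * w / 2)‖ * ‖riemannZeta w‖
        ≤ 2 * 1 * (C3 * Real.exp (-θ * t)) * Real.exp (Real.pi / 2 * t) * (C2 * Real.exp (ε/2 * t)) := by
          gcongr
      _ = 2 * C3 * C2 * Real.exp (-θ * t + Real.pi / 2 * t + ε/2 * t) := by
          rw [Real.exp_add, Real.exp_add]; ring
      _ ≤ 2 * C3 * C2 * Real.exp (ε * t) := by
          gcongr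
          have : Real.pi/2 - ε/2 ≤ θ := le_max_right _ _
          nlinarith
      _ ≤ _ := by gcongr; linarith

lemma zeta_deriv_strip {ε : ℝ} (hε : 0 < ε) (a b : ℝ) :
    ∃ C > 0, ∀ s : ℂ, a ≤ s.re → s.re ≤ b → 2 ≤ |s.im| →
      ‖deriv riemannZeta s‖ ≤ C * Real.exp (ε * |s.im|) := by
  obtain ⟨C, hC, h⟩ := zeta_strip hε (a-1) (b+1)
  refine ⟨C * Real.exp ε, by positivity, fun s ha hb hs => ?_⟩
  have hball : ∀ z ∈ Metric.closedBall s 1, |z.re - s.re| ≤ 1 ∧ |z.im - s.im| ≤ 1 := by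
    intro z hz
    rw [Metric.mem_closedBall, dist_eq_norm] at hz
    have h1 := Complex.abs_re_le_norm (z - s)
    have h2 := Complex.abs_im_le_norm (z - s)
    simp at h1 h2
    exact ⟨h1.trans hz, h2.trans hz⟩
  have him : ∀ z ∈ Metric.closedBall s 1, 1 ≤ |z.im| ∧ |z.im| ≤ |s.im| + 1 := by
    intro z hz
    have h2 := (hball z hz).2
    have h3 := abs_sub_abs_le_abs_sub z.im s.im
    have h4 := abs_sub_abs_le_abs_sub s.im z.im
    rw [abs_sub_comm] at h4
    constructor <;> linarith
  have hd : DifferentiableOn ℂ riemannZeta (Metric.closedBall s 1) := by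
    intro z hz
    apply (differentiableAt_riemannZeta _).differentiableWithinAt
    rintro rfl
    have := (him 1 hz).1
    simp at this; linarith
  have hd' : DiffContOnCl ℂ riemannZeta (Metric.ball s 1) := by
    apply DifferentiableOn.diffContOnCl
    rwa [closure_ball s one_ne_zero]
  have := Complex.norm_deriv_le_of_forall_mem_sphere_norm_le (C := C * Real.exp (ε * (|s.im| + 1))) one_pos hd' (by
    intro z hz
    have hz' := Metric.sphere_subset_closedBall hz
    have h1 := abs_le.mp (hball z hz').1
    refine (h z (by linarith) (by linarith) (him z hz').1).trans ?_
    have := (him z hz').2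
    gcongr)
  rw [div_one] at this
  refine this.trans (le_of_eq ?_)
  rw [mul_add, mul_one, Real.exp_add]; ring

lemma exp_abs_integrable {c : ℝ} (hc : 0 < c) : Integrable (fun t : ℝ => Real.exp (-c * |t|)) := by
  have h1 : IntegrableOn (fun t : ℝ => Real.exp (-c * |t|)) (Set.Ioi 0) := by
    refine (integrableOn_exp_mul_Ioi (a := -c) (by linarith) 0).congr_fun ?_ measurableSet_Ioi
    intro t ht
    simp only [abs_of_pos (show (0:ℝ) < t from ht)]
  have h2 : IntegrableOn (fun t : ℝ => Real.exp (-c * |t|)) (Set.Iic 0) := by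
    refine (integrableOn_exp_mul_Iic (a := c) hc 0).congr_fun ?_ measurableSet_Iic
    intro t ht
    simp only [abs_of_nonpos (show t ≤ (0:ℝ) from ht)]
    ring_nf
  rw [← integrableOn_univ, ← Set.Iic_union_Ioi (a := (0:ℝ))]
  exact h2.union h1

lemma norm_cpow_neg_le {z s : ℂ} {lam : ℝ} (hz : z ≠ 0) (hl : |z.arg| ≤ lam) :
    ‖z ^ (-s)‖ ≤ ‖z‖ ^ (-s.re) * Real.exp (lam * |s.im|) := by
  rw [Complex.norm_cpow_of_ne_zero hz, div_eq_mul_inv, ← Real.exp_neg]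
  simp only [Complex.neg_re, Complex.neg_im]
  gcongr
  have h1 : -(z.arg * -s.im) ≤ |z.arg| * |s.im| := by
    rw [← abs_mul]; have := le_abs_self (z.arg * s.im); linarith
  have h2 : |z.arg| * |s.im| ≤ lam * |s.im| := by gcongr
  linarith

lemma line_re (c t : ℝ) : ((c:ℂ) + t * Complex.I).re = c := by simp
lemma line_im (c t : ℝ) : ((c:ℂ) + t * Complex.I).im = t := by simp

lemma line_cont (c : ℝ) : Continuous (fun t : ℝ => (c:ℂ) + t * Complex.I) := by fun_prop

lemma gamma_line_cont {c : ℝ} (hc : 0 < c) (z : ℂ) (hz : z ≠ 0) :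
    Continuous (fun t : ℝ => z ^ (-((c:ℂ) + t * Complex.I)) * Complex.Gamma ((c:ℂ) + t * Complex.I)) := by
  rw [continuous_iff_continuousAt]
  intro t
  apply ContinuousAt.mul
  · apply ContinuousAt.const_cpow
    · fun_prop
    · exact Or.inl hz
  · have : ContinuousAt Complex.Gamma ((c:ℂ) + t * Complex.I) := by
      apply (Complex.differentiableAt_Gamma _ _).continuousAt
      intro m h
      have := congrArg Complex.re h
      simp at this
      have : (0:ℝ) ≤ m := by positivity
      linarith
    exact ContinuousAt.comp (f := fun t : ℝ => (c:ℂ) + t * Complex.I) this (line_cont c).continuousAt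

lemma gamma_line_int {c : ℝ} (hc : 0 < c) (z : ℂ) (hz : 0 < z.re) :
    Integrable (fun t : ℝ => z ^ (-((c:ℂ) + t * Complex.I)) * Complex.Gamma ((c:ℂ) + t * Complex.I)) := by
  have hz0 : z ≠ 0 := by rintro rfl; simp at hz
  have harg : |z.arg| < Real.pi / 2 := Complex.abs_arg_lt_pi_div_two_iff.mpr (Or.inl hz)
  set lam := |z.arg|
  set θ := (lam + Real.pi/2)/2 with hθ
  have hl0 : 0 ≤ lam := abs_nonneg _
  obtain ⟨C, hC, h⟩ := Gamma_decay (θ := θ) (by positivity) (by linarith) (a := c) (b := c) hc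
  refine Integrable.mono' ((exp_abs_integrable (c := θ - lam) (by linarith)).const_mul (‖z‖^(-c) * C))
    (gamma_line_cont hc z hz0).aestronglyMeasurable (Eventually.of_forall fun t => ?_)
  have h1 := h ((c:ℂ) + t * Complex.I) (by simp) (by simp)
  have h2 := norm_cpow_neg_le (s := (c:ℂ) + t * Complex.I) hz0 (le_refl |z.arg|)
  rw [line_re] at h2; rw [line_im] at h1 h2
  rw [norm_mul]
  calc _ ≤ (‖z‖ ^ (-c) * Real.exp (lam * |t|)) * (C * Real.exp (-θ * |t|)) := by gcongr
    _ = ‖z‖ ^ (-c) * C * (Real.exp (lam * |t|) * Real.exp (-θ * |t|)) := by ring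
    _ = _ := by rw [← Real.exp_add]; ring_nf

lemma exp_mellin (z : ℂ) (hz : 0 < z.re) :
    Complex.exp (-z) = (1 / (2 * Real.pi) : ℂ) *
      ∫ t : ℝ, z ^ (-(2 + t * Complex.I)) * Complex.Gamma (2 + t * Complex.I) := by
  have hm : ∀ s : ℂ, 0 < s.re → mellin (fun x : ℝ => Complex.exp (-(z * x))) s = z ^ (-s) * Complex.Gamma s := by
    intro s hs
    rw [← gi_complex s hs z hz, mellin]
    rfl
  have hc : MellinConvergent (fun x : ℝ => Complex.exp (-(z * x))) ((2:ℝ):ℂ) := by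
    have := gi_int ((2:ℝ):ℂ) z (by simp) hz
    exact this
  have hv : Complex.VerticalIntegrable (mellin (fun x : ℝ => Complex.exp (-(z * x)))) (2:ℝ) := by
    have := gamma_line_int (c := 2) (by norm_num) z hz
    refine this.congr (Eventually.of_forall fun t => ?_)
    exact (hm _ (by simp)).symm
  have := mellinInv_mellin_eq 2 (fun x : ℝ => Complex.exp (-(z * x))) (x := 1) one_pos hc hv (by fun_prop)
  simp only [Complex.ofReal_one, mul_one] at this
  rw [← this, mellinInv]
  rw [Complex.real_smul]
  congr 1
  · push_cast; rfl
  · apply integral_congr_ae (Eventually.of_forall fun t => ?_)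
    simp only [Complex.ofReal_one, Complex.one_cpow, one_smul]
    rw [hm _ (by simp)]
    push_cast; rfl

lemma zeta_hasSum_succ {s : ℂ} (hs : 1 < s.re) :
    HasSum (fun k : ℕ => ((k:ℂ)+1)^(-s)) (riemannZeta s) := by
  have := (hasSum_nat_add_iff' 1).mpr (LSeriesHasSum_one hs)
  simp only [Finset.range_one, Finset.sum_singleton, LSeries.term_zero, sub_zero] at this
  refine this.congr_fun ?_
  intro k
  rw [LSeries.term_of_ne_zero (by omega), Complex.cpow_neg]
  simp

lemma zeta_deriv_hasSum_succ {s : ℂ} (hs : 1 < s.re) :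
    HasSum (fun k : ℕ => Complex.log ((k:ℂ)+1) * ((k:ℂ)+1)^(-s)) (-deriv riemannZeta s) := by
  have ha : LSeries.abscissaOfAbsConv 1 < s.re := by
    rw [LSeries.abscissaOfAbsConv_one]; exact_mod_cast hs
  have h0 := (LSeriesSummable_logMul_of_lt_re ha).LSeriesHasSum
  have hd : deriv riemannZeta s = - LSeries (LSeries.logMul 1) s := by
    rw [← LSeries_deriv ha]
    apply Filter.EventuallyEq.deriv_eq
    have : {z : ℂ | 1 < z.re} ∈ 𝓝 s := (isOpen_lt continuous_const Complex.continuous_re).mem_nhds hs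
    filter_upwards [this] with z hz
    exact (LSeries_one_eq_riemannZeta hz).symm
  rw [hd, neg_neg]
  have := (hasSum_nat_add_iff' 1).mpr h0
  simp only [Finset.range_one, Finset.sum_singleton, LSeries.term_zero, sub_zero] at this
  refine this.congr_fun ?_
  intro k
  rw [LSeries.term_of_ne_zero (by omega), Complex.cpow_neg]
  simp [LSeries.logMul, div_eq_mul_inv]

/-- the Mellin integrand -/
noncomputable def HH (y s : ℂ) : ℂ :=
  Complex.Gamma s * (-deriv riemannZeta s) * riemannZeta s * y ^ (-s)

lemma mul_cpow_aux (a : ℝ) (ha : 0 < a) (z w : ℂ) (hz : z ≠ 0) :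
    ((a:ℂ) * z) ^ w = (a:ℂ)^w * z ^ w := by
  have ha' : (a:ℂ) ≠ 0 := by exact_mod_cast ha.ne'
  rw [Complex.cpow_def_of_ne_zero (mul_ne_zero ha' hz), Complex.cpow_def_of_ne_zero ha',
    Complex.cpow_def_of_ne_zero hz, Complex.log_ofReal_mul ha hz, ← Complex.exp_add,
    Complex.ofReal_log ha.le]
  ring_nf

lemma geom_aux (z : ℂ) (hz : 0 < z.re) :
    HasSum (fun k : ℕ => Complex.exp (-(((k:ℂ)+1) * z))) (1 / (Complex.exp z - 1)) := by
  have hn : ‖Complex.exp (-z)‖ < 1 := by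
    rw [Complex.norm_exp, Complex.neg_re]; exact Real.exp_lt_one_iff.mpr (by linarith)
  have := (hasSum_geometric_of_norm_lt_one hn).mul_left (Complex.exp (-z))
  have e : Complex.exp (-z) * (1 - Complex.exp (-z))⁻¹ = 1 / (Complex.exp z - 1) := by
    have h1 : 1 - Complex.exp (-z) ≠ 0 := by
      intro h
      rw [sub_eq_zero] at h
      rw [← h] at hn; simp at hn
    have h2 : Complex.exp z * Complex.exp (-z) = 1 := by rw [← Complex.exp_add]; simp
    have h3 : Complex.exp z - 1 ≠ 0 := by
      intro h
      apply h1
      rw [sub_eq_zero] at h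
      rw [h, one_mul] at h2
      rw [h2]; ring
    field_simp
    linear_combination h2
  rw [e] at this
  refine this.congr_fun ?_
  intro k
  rw [← Complex.exp_nat_mul, ← Complex.exp_add]
  ring_nf

lemma dbl_hasSum {f g : ℕ → ℂ} {a b : ℂ} (hf : HasSum f a) (hg : HasSum g b) :
    HasSum (fun p : ℕ × ℕ => f p.1 * g p.2) (a * b) :=
  HasSum.mul hf hg (summable_mul_of_summable_norm hf.summable.norm hg.summable.norm)

lemma S_hasSum (y : ℂ) (hy : 0 < y.re) :
    HasSum (fun n : ℕ => Complex.log ((n : ℂ) + 1) / (Complex.exp (((n : ℂ) + 1) * y) - 1))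
      ((1 / (2 * Real.pi) : ℂ) * ∫ t : ℝ, HH y (2 + t * Complex.I)) := by
  have hy0 : y ≠ 0 := by rintro rfl; simp at hy
  set G : ℝ → ℂ := fun t => y ^ (-(2 + t * Complex.I)) * Complex.Gamma (2 + t * Complex.I) with hG
  have hGi : Integrable G := by
    have := gamma_line_int (c := 2) (by norm_num) y hy
    simpa only [Complex.ofReal_ofNat] using this
  let F : ℕ × ℕ → ℝ → ℂ := fun p t =>
    (Complex.log ((p.1:ℂ)+1) * ((p.1:ℂ)+1)^(-(2 + t * Complex.I))) * ((p.2:ℂ)+1)^(-(2 + t * Complex.I)) * G t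
  have hpos : ∀ n : ℕ, (0:ℝ) < (n:ℝ)+1 := fun n => by positivity
  have hne : ∀ n : ℕ, (n:ℂ)+1 ≠ 0 := fun n => by exact_mod_cast Nat.succ_ne_zero n
  have hcast : ∀ n : ℕ, (n:ℂ)+1 = (((n:ℝ)+1 : ℝ):ℂ) := fun n => by push_cast; rfl
  have hnorm : ∀ (n : ℕ) (t : ℝ), ‖((n:ℂ)+1)^(-(2 + t * Complex.I))‖ = ‖((n:ℂ)+1)^(-2:ℂ)‖ := by
    intro n t
    rw [hcast, Complex.norm_cpow_eq_rpow_re_of_pos (hpos n), Complex.norm_cpow_eq_rpow_re_of_pos (hpos n)]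
    simp
  have hFn : ∀ p t, ‖F p t‖ = (‖Complex.log ((p.1:ℂ)+1) * ((p.1:ℂ)+1)^(-2:ℂ)‖ * ‖((p.2:ℂ)+1)^(-2:ℂ)‖) * ‖G t‖ := by
    intro p t
    simp only [F, norm_mul, hnorm]
  have hFc : ∀ p : ℕ × ℕ, Continuous fun t : ℝ => (Complex.log ((p.1:ℂ)+1) * ((p.1:ℂ)+1)^(-(2 + t * Complex.I))) * ((p.2:ℂ)+1)^(-(2 + t * Complex.I)) := by
    intro p
    have : ∀ n : ℕ, Continuous fun t : ℝ => ((n:ℂ)+1)^(-(2 + t * Complex.I)) := by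
      intro n
      refine Continuous.const_cpow (by fun_prop) (Or.inl (hne n))
    exact (continuous_const.mul (this _)).mul (this _)
  have hFi : ∀ p, Integrable (F p) := by
    intro p
    refine Integrable.mono' (hGi.norm.const_mul (‖Complex.log ((p.1:ℂ)+1) * ((p.1:ℂ)+1)^(-2:ℂ)‖ * ‖((p.2:ℂ)+1)^(-2:ℂ)‖))
      ((hFc p).aestronglyMeasurable.mul hGi.aestronglyMeasurable) (Eventually.of_forall fun t => ?_)
    rw [hFn]
  have hsum : Summable fun p => ∫ t, ‖F p t‖ := by
    simp_rw [hFn, integral_const_mul]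
    apply Summable.mul_right
    refine Summable.mul_of_nonneg (f := fun n : ℕ => ‖Complex.log ((n:ℂ)+1) * ((n:ℂ)+1)^(-2:ℂ)‖)
      (g := fun n : ℕ => ‖((n:ℂ)+1)^(-2:ℂ)‖) ?_ ?_ (fun _ => norm_nonneg _) (fun _ => norm_nonneg _)
    · exact (zeta_deriv_hasSum_succ (s := 2) (by simp)).summable.norm
    · exact (zeta_hasSum_succ (s := 2) (by simp)).summable.norm
  have key := hasSum_integral_of_summable_integral_norm hFi hsum
  have hIint : ∫ t, (∑' p, F p t) = ∫ t : ℝ, HH y (2 + t * Complex.I) := by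
    refine integral_congr_ae (Eventually.of_forall fun t => ?_)
    have h1 := zeta_deriv_hasSum_succ (s := 2 + t * Complex.I) (by simp)
    have h2 := zeta_hasSum_succ (s := 2 + t * Complex.I) (by simp)
    have h3 := ((dbl_hasSum h1 h2).mul_right (G t)).tsum_eq
    simp only [F]
    rw [h3, HH, hG]; ring
  rw [hIint] at key
  have key2 := key.mul_left (1 / (2 * Real.pi) : ℂ)
  have hterm : ∀ p : ℕ × ℕ, (1 / (2 * Real.pi) : ℂ) * ∫ t, F p t =
      Complex.log ((p.1:ℂ)+1) * Complex.exp (-(((p.2:ℂ)+1) * (((p.1:ℂ)+1) * y))) := by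
    intro p
    have hz : 0 < (((p.2:ℂ)+1) * (((p.1:ℂ)+1) * y)).re := by
      rw [hcast, hcast, Complex.re_ofReal_mul, Complex.re_ofReal_mul]
      have := hpos p.1; have := hpos p.2; positivity
    rw [exp_mellin _ hz, mul_left_comm (Complex.log _), ← integral_const_mul (Complex.log _)]
    congr 1
    refine integral_congr_ae (Eventually.of_forall fun t => ?_)
    simp only [F, G]
    have e1 := mul_cpow_aux ((p.2:ℝ)+1) (hpos _) (((p.1:ℂ)+1) * y) (-(2 + t * Complex.I)) (mul_ne_zero (hne _) hy0)
    have e2 := mul_cpow_aux ((p.1:ℝ)+1) (hpos _) y (-(2 + t * Complex.I)) hy0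
    rw [← hcast] at e1 e2
    rw [e1, e2]; ring
  simp_rw [hterm] at key2
  refine key2.prod_fiberwise fun n => ?_
  have hz : 0 < (((n:ℂ)+1) * y).re := by
    rw [hcast, Complex.re_ofReal_mul]
    have := hpos n; positivity
  have := (geom_aux _ hz).mul_left (Complex.log ((n:ℂ)+1))
  rw [mul_one_div] at this
  exact this

lemma analytic_dslope {f : ℂ → ℂ} {p : ℂ} (hf : AnalyticAt ℂ f p) : AnalyticAt ℂ (dslope f p) p := by
  obtain ⟨q, hq⟩ := hf
  exact ⟨_, hq.has_fpower_series_dslope_fslope⟩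

lemma eq_dslope (f : ℂ → ℂ) (p s : ℂ) : f s = f p + (s - p) * dslope f p s := by
  have := sub_smul_dslope f p s
  rw [smul_eq_mul] at this
  rw [this]; ring

/-- removable singularities glued -/
lemma removable_glue (U : Set ℂ) (D : ℂ → ℂ)
    (h : ∀ s ∈ U, ∃ k : ℂ → ℂ, AnalyticAt ℂ k s ∧ D =ᶠ[𝓝[≠] s] k) :
    ∃ g : ℂ → ℂ, (∀ s ∈ U, DifferentiableAt ℂ g s) ∧ ∀ s, ContinuousAt D s → g s = D s := by
  refine ⟨fun s => limUnder (𝓝[≠] s) D, ?_, ?_⟩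
  · intro s hs
    obtain ⟨k, hk, hD⟩ := h s hs
    have : (fun s => limUnder (𝓝[≠] s) D) =ᶠ[𝓝 s] k := by
      have h1 : ∀ᶠ z in 𝓝 s, AnalyticAt ℂ k z := hk.eventually_analyticAt
      rw [Filter.EventuallyEq, eventually_nhdsWithin_iff] at hD
      filter_upwards [h1, hD.eventually_nhds] with z hz1 hz2
      apply Tendsto.limUnder_eq
      have h3 : Tendsto k (𝓝[≠] z) (𝓝 (k z)) := hz1.continuousAt.mono_left nhdsWithin_le_nhds
      refine h3.congr' ?_
      by_cases hzs : z = s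
      · rw [Filter.EventuallyEq, eventually_nhdsWithin_iff]
        filter_upwards [hz2] with w hw hw'
        rw [hzs] at hw'
        exact (hw hw').symm
      · have h4 : ∀ᶠ w in 𝓝 z, w ≠ s := isOpen_ne.mem_nhds hzs
        apply Filter.Eventually.filter_mono nhdsWithin_le_nhds
        filter_upwards [hz2, h4] with w hw hw'
        exact (hw hw').symm
    exact (hk.congr this.symm).differentiableAt
  · intro s hs
    apply Tendsto.limUnder_eq
    exact hs.mono_left nhdsWithin_le_nhds

/-- second order jets -/
def Jet (f : ℂ → ℂ) (p a0 a1 a2 : ℂ) : Prop :=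
  ∃ k : ℂ → ℂ, AnalyticAt ℂ k p ∧ ∀ᶠ s in 𝓝 p, f s = a0 + a1 * (s - p) + a2 * (s-p)^2 + (s-p)^3 * k s

lemma Jet.mul {f g : ℂ → ℂ} {p a0 a1 a2 b0 b1 b2 : ℂ} (hf : Jet f p a0 a1 a2) (hg : Jet g p b0 b1 b2) :
    Jet (fun s => f s * g s) p (a0*b0) (a0*b1+a1*b0) (a0*b2+a1*b1+a2*b0) := by
  obtain ⟨k, hk, h1⟩ := hf
  obtain ⟨l, hl, h2⟩ := hg
  refine ⟨fun s => (a1*b2+a2*b1) + a2*b2*(s-p) + k s * (b0+b1*(s-p)+b2*(s-p)^2)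
    + l s * (a0+a1*(s-p)+a2*(s-p)^2) + (s-p)^3*(k s * l s), ?_, ?_⟩
  · fun_prop
  · filter_upwards [h1, h2] with s e1 e2
    rw [e1, e2]; ring

lemma Jet.sub {f g : ℂ → ℂ} {p a0 a1 a2 b0 b1 b2 : ℂ} (hf : Jet f p a0 a1 a2) (hg : Jet g p b0 b1 b2) :
    Jet (fun s => f s - g s) p (a0-b0) (a1-b1) (a2-b2) := by
  obtain ⟨k, hk, h1⟩ := hf
  obtain ⟨l, hl, h2⟩ := hg
  refine ⟨fun s => k s - l s, ?_, ?_⟩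
  · fun_prop
  · filter_upwards [h1, h2] with s e1 e2
    rw [e1, e2]; ring

lemma Jet.add {f g : ℂ → ℂ} {p a0 a1 a2 b0 b1 b2 : ℂ} (hf : Jet f p a0 a1 a2) (hg : Jet g p b0 b1 b2) :
    Jet (fun s => f s + g s) p (a0+b0) (a1+b1) (a2+b2) := by
  obtain ⟨k, hk, h1⟩ := hf
  obtain ⟨l, hl, h2⟩ := hg
  refine ⟨fun s => k s + l s, ?_, ?_⟩
  · fun_prop
  · filter_upwards [h1, h2] with s e1 e2
    rw [e1, e2]; ring

lemma Jet.congr {f g : ℂ → ℂ} {p a0 a1 a2 : ℂ} (hf : Jet f p a0 a1 a2) (h : f =ᶠ[𝓝 p] g) :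
    Jet g p a0 a1 a2 := by
  obtain ⟨k, hk, h1⟩ := hf
  refine ⟨k, hk, ?_⟩
  filter_upwards [h1, h] with s e1 e2
  rw [← e2, e1]

lemma Jet.analytic {f : ℂ → ℂ} {p a0 a1 a2 : ℂ} (hf : Jet f p a0 a1 a2) : AnalyticAt ℂ f p := by
  obtain ⟨k, hk, h1⟩ := hf
  have : AnalyticAt ℂ (fun s => a0 + a1 * (s - p) + a2 * (s-p)^2 + (s-p)^3 * k s) p := by fun_prop
  refine this.congr ?_
  filter_upwards [h1] with s e1 using e1.symm

lemma Jet.val {f : ℂ → ℂ} {p a0 a1 a2 : ℂ} (hf : Jet f p a0 a1 a2) : f p = a0 := by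
  obtain ⟨k, hk, h1⟩ := hf
  have := h1.self_of_nhds
  simpa using this

lemma jet_exists {f : ℂ → ℂ} {p : ℂ} (hf : AnalyticAt ℂ f p) : ∃ a0 a1 a2, Jet f p a0 a1 a2 := by
  have h1 := analytic_dslope hf
  have h2 := analytic_dslope h1
  refine ⟨f p, dslope f p p, dslope (dslope f p) p p, _, analytic_dslope h2, Eventually.of_forall fun s => ?_⟩
  have e1 := eq_dslope f p s
  have e2 := eq_dslope (dslope f p) p s
  have e3 := eq_dslope (dslope (dslope f p) p) p s
  rw [e1, e2, e3]; ring

lemma Jet.deriv {f : ℂ → ℂ} {p a0 a1 a2 : ℂ} (hf : Jet f p a0 a1 a2) :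
    ∃ b, Jet (deriv f) p a1 (2*a2) b := by
  obtain ⟨k, hk, h1⟩ := hf
  obtain ⟨b0, b1, b2, l, hl, h2⟩ := jet_exists hk
  refine ⟨3 * b0, fun s => (3 * b1 + 3*b2*(s-p) + 3*(s-p)^2*l s) + _root_.deriv k s, ?_, ?_⟩
  · have := hk.deriv
    fun_prop
  · have h3 : ∀ᶠ s in 𝓝 p, f =ᶠ[𝓝 s] (fun s => a0 + a1 * (s - p) + a2 * (s-p)^2 + (s-p)^3 * k s) :=
      h1.eventually_nhds
    filter_upwards [h2, h3, hk.eventually_analyticAt] with s e2 e3 e4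
    rw [e3.deriv_eq]
    have hs : HasDerivAt (fun s : ℂ => s - p) 1 s := (hasDerivAt_id s).sub_const p
    have hd := ((((hs.const_mul a1).const_add a0).fun_add ((hs.fun_pow 2).const_mul a2)).fun_add
      ((hs.fun_pow 3).fun_mul e4.differentiableAt.hasDerivAt)).deriv
    rw [hd, e2]
    push_cast
    ring

lemma Jet.deriv1 {f : ℂ → ℂ} {p a0 a1 a2 : ℂ} (hf : Jet f p a0 a1 a2) : _root_.deriv f p = a1 := by
  obtain ⟨b, hb⟩ := hf.deriv
  exact hb.val

lemma Jet.deriv2 {f : ℂ → ℂ} {p a0 a1 a2 : ℂ} (hf : Jet f p a0 a1 a2) :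
    _root_.deriv (_root_.deriv f) p = 2 * a2 := by
  obtain ⟨b, hb⟩ := hf.deriv
  exact hb.deriv1

lemma Jet.unique {f : ℂ → ℂ} {p a0 a1 a2 b0 b1 b2 : ℂ} (hf : Jet f p a0 a1 a2) (hg : Jet f p b0 b1 b2) :
    a0 = b0 ∧ a1 = b1 ∧ a2 = b2 := by
  refine ⟨hf.val.symm.trans hg.val, hf.deriv1.symm.trans hg.deriv1, ?_⟩
  have := hf.deriv2.symm.trans hg.deriv2
  linear_combination this/2

lemma jet_of_analytic {f : ℂ → ℂ} {p : ℂ} (hf : AnalyticAt ℂ f p) :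
    Jet f p (f p) (deriv f p) (deriv (deriv f) p / 2) := by
  obtain ⟨a0, a1, a2, h⟩ := jet_exists hf
  rw [h.val, h.deriv1, h.deriv2]
  simpa using h

lemma gamma_analytic {s : ℂ} (h : ∀ m : ℕ, s ≠ -m) : AnalyticAt ℂ Complex.Gamma s := by
  have hU : IsOpen {s : ℂ | ∀ m : ℕ, s ≠ -m} := by
    have : {s : ℂ | ∀ m : ℕ, s ≠ -m} = {s : ℂ | (Complex.Gamma s)⁻¹ ≠ 0} := by
      ext s
      simp only [Set.mem_ofPred_eq, ne_eq, inv_eq_zero, Complex.Gamma_eq_zero_iff, not_exists]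
    rw [this]
    exact isOpen_ne_fun Complex.differentiable_one_div_Gamma.continuous continuous_const
  exact DifferentiableOn.analyticAt (s := {s : ℂ | ∀ m : ℕ, s ≠ -m})
    (fun z hz => (Complex.differentiableAt_Gamma z hz).differentiableWithinAt) (hU.mem_nhds h)

lemma one_ne_neg_nat (m : ℕ) : (1:ℂ) ≠ -m := by
  intro h
  have := congrArg Complex.re h
  simp at this
  have : (0:ℝ) ≤ m := by positivity
  linarith

lemma gamma_jet : Jet Complex.Gamma 1 1 (-(Real.eulerMascheroniConstant:ℂ))
    ((Real.eulerMascheroniConstant:ℂ)^2/2 + (Real.pi:ℂ)^2/12) := by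
  obtain ⟨a0, a1, g2, hJ⟩ := jet_exists (gamma_analytic one_ne_neg_nat)
  have h0 : a0 = 1 := by rw [← hJ.val, Complex.Gamma_one]
  have h1 : a1 = -(Real.eulerMascheroniConstant:ℂ) := by
    rw [← hJ.deriv1, Complex.hasDerivAt_Gamma_one.deriv]
  subst h0
  set γ : ℂ := (Real.eulerMascheroniConstant:ℂ)
  have hJ2 : Jet (fun s => Complex.Gamma (2 - s)) 1 1 (-a1) g2 := by
    obtain ⟨k, hk, hk2⟩ := hJ
    refine ⟨fun s => - k (2 - s), ?_, ?_⟩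
    · have : AnalyticAt ℂ k ((fun s : ℂ => 2 - s) 1) := by
        norm_num; exact hk
      have h2 : AnalyticAt ℂ (fun s : ℂ => 2 - s) 1 := by fun_prop
      exact (this.fun_comp h2).neg
    · have ht : Tendsto (fun s : ℂ => 2 - s) (𝓝 1) (𝓝 1) := by
        have : Continuous (fun s : ℂ => 2 - s) := by fun_prop
        have := this.tendsto 1
        norm_num at this
        exact this
      filter_upwards [ht.eventually hk2] with s hs
      rw [hs]; ring
  have hP := hJ.mul hJ2
  set Φ : ℂ → ℂ := fun s => Complex.Gamma s * Complex.Gamma (2 - s) with hΦ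
  set sn : ℂ → ℂ := fun s => Complex.sin (Real.pi * (s - 1)) with hsn
  set cs : ℂ → ℂ := fun s => Complex.cos (Real.pi * (s - 1)) with hcs
  have dl : ∀ s, HasDerivAt (fun s : ℂ => (Real.pi:ℂ) * (s - 1)) Real.pi s := by
    intro s
    simpa using ((hasDerivAt_id s).sub_const (1:ℂ)).const_mul (Real.pi:ℂ)
  have dsn : ∀ s, HasDerivAt sn (cs s * Real.pi) s := fun s => (dl s).csin
  have dcs : ∀ s, HasDerivAt cs (-sn s * Real.pi) s := fun s => (dl s).ccos
  have asn : AnalyticAt ℂ sn 1 := Differentiable.analyticAt (fun s => (dsn s).differentiableAt) 1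
  have acs : AnalyticAt ℂ cs 1 := Differentiable.analyticAt (fun s => (dcs s).differentiableAt) 1
  have jsn := jet_of_analytic asn
  have jcs := jet_of_analytic acs
  have e1 : deriv sn = fun s => cs s * Real.pi := funext fun s => (dsn s).deriv
  have e2 : deriv cs = fun s => -sn s * Real.pi := funext fun s => (dcs s).deriv
  have e3 : deriv (deriv sn) 1 = 0 := by
    rw [e1, ((dcs 1).mul_const _).deriv]; simp [hsn]
  have e4 : deriv (deriv cs) 1 = -Real.pi^2 := by
    rw [e2, ((dsn 1).fun_neg.mul_const _).deriv]; simp [hcs]; ring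
  rw [e3, (dsn 1).deriv] at jsn
  rw [e4, (dcs 1).deriv] at jcs
  have s1 : sn 1 = 0 := by simp [hsn]
  have c1 : cs 1 = 1 := by simp [hcs]
  rw [s1, c1] at jsn
  rw [s1, c1] at jcs
  have hrefl : ∀ᶠ s in 𝓝 (1:ℂ), Φ s * sn s = Real.pi * (s - 1) := by
    filter_upwards [Metric.ball_mem_nhds (1:ℂ) one_pos] with s hs
    by_cases h : s - 1 = 0
    · simp [hsn, h]
    · have hr := Complex.Gamma_mul_Gamma_one_sub (s - 1)
      have hg := Complex.Gamma_add_one (s - 1) h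
      have hs0 : sn s ≠ 0 := by
        rw [hsn]
        intro h0
        rw [Complex.sin_eq_zero_iff] at h0
        obtain ⟨k, hk⟩ := h0
        have hpi : (Real.pi:ℂ) ≠ 0 := by exact_mod_cast Real.pi_ne_zero
        have hk' : s - 1 = k := by
          apply mul_left_cancel₀ hpi
          rw [hk]; ring
        rw [Metric.mem_ball, dist_eq_norm, hk', Complex.norm_intCast] at hs
        have hk0 : k = 0 := by
          have : |k| < 1 := by exact_mod_cast hs
          exact Int.abs_lt_one_iff.mp this
        apply h; rw [hk', hk0]; simp
      rw [sub_add_cancel] at hg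
      rw [hΦ]
      simp only
      rw [hg, show (2:ℂ) - s = 1 - (s-1) by ring, mul_assoc (s-1), hr]
      rw [hsn] at hs0 ⊢
      simp only at hs0 ⊢
      rw [mul_assoc, div_mul_cancel₀ _ hs0]; ring
  obtain ⟨b, hPd⟩ := hP.deriv
  have hd : (fun s => deriv Φ s * sn s + Φ s * (cs s * Real.pi)) =ᶠ[𝓝 1] fun _ => (Real.pi:ℂ) := by
    have hp := hP.analytic.eventually_analyticAt
    filter_upwards [hrefl.eventually_nhds, hp] with s hs ha
    have hs' : (fun s => Φ s * sn s) =ᶠ[𝓝 s] fun s => (Real.pi:ℂ) * (s-1) := hs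
    have h1 := hs'.deriv_eq
    rw [(dl s).deriv, (ha.differentiableAt.hasDerivAt.fun_mul (dsn s)).deriv] at h1
    exact h1
  have jc : Jet (fun _ => (Real.pi:ℂ)) 1 Real.pi 0 0 := ⟨fun _ => 0, analyticAt_const, Eventually.of_forall fun s => by ring⟩
  have J := (((hPd.mul jsn).add (hP.mul (jcs.mul jc))).congr hd).unique jc
  have := J.2.2
  have hpi : (Real.pi:ℂ) ≠ 0 := by exact_mod_cast Real.pi_ne_zero
  have hg2 : g2 = γ^2/2 + (Real.pi:ℂ)^2/12 := by
    rw [h1] at this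
    apply mul_left_cancel₀ hpi
    linear_combination this/6
  rw [h1, hg2] at hJ
  exact hJ

lemma zeta1_jet : ∃ c, Jet riemannZeta₁ 1 1 (Real.eulerMascheroniConstant:ℂ) c := by
  have := jet_of_analytic (differentiable_riemannZeta₁.analyticAt 1)
  rw [riemannZeta₁_one, deriv_riemannZeta₁_one] at this
  exact ⟨_, this⟩

lemma cpow_jet (y : ℂ) (hy : y ≠ 0) :
    Jet (fun s => y ^ (-s)) 1 y⁻¹ (-(y⁻¹ * Complex.log y)) (y⁻¹ * Complex.log y ^ 2 / 2) := by
  have d : ∀ s : ℂ, HasDerivAt (fun s : ℂ => y ^ (-s)) (-(y^(-s) * Complex.log y)) s := by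
    intro s
    refine ((hasDerivAt_neg s).const_cpow (Or.inl hy)).congr_deriv ?_
    ring
  have := jet_of_analytic (Differentiable.analyticAt (fun s => (d s).differentiableAt) 1)
  have e1 : deriv (fun s : ℂ => y ^ (-s)) = fun s => -(y^(-s) * Complex.log y) := funext fun s => (d s).deriv
  have e2 : deriv (deriv (fun s : ℂ => y ^ (-s))) 1 = y⁻¹ * Complex.log y ^ 2 := by
    rw [e1, ((d 1).mul_const _).fun_neg.deriv, Complex.cpow_neg_one]; ring
  rw [e2, e1] at this
  simpa only [Complex.cpow_neg_one] using this

/-- numerator at 1 -/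
lemma HH_jet_one (y : ℂ) (hy : y ≠ 0) : ∃ a0 a1 : ℂ, ∃ k : ℂ → ℂ, AnalyticAt ℂ k 1 ∧
    ∀ᶠ s in 𝓝[≠] (1:ℂ), HH y s = a0 / (s-1)^3 + a1/(s-1)^2 +
      (Complex.log y ^2/(2*y) + ((Real.pi : ℂ) ^ 2 / 12 - (Real.eulerMascheroniConstant : ℂ) ^ 2 / 2) / y)/(s-1) + k s := by
  obtain ⟨c, hz⟩ := zeta1_jet
  obtain ⟨b, hzd⟩ := hz.deriv
  have jid : Jet (fun s => s - 1) 1 0 1 0 := ⟨fun _ => 0, analyticAt_const, Eventually.of_forall fun s => by ring⟩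
  have J := ((gamma_jet.mul ((hz.sub (jid.mul hzd)))).mul hz).mul (cpow_jet y hy)
  obtain ⟨k, hk, hJ⟩ := J
  refine ⟨y⁻¹, -(y⁻¹ * Complex.log y), k, hk, ?_⟩
  rw [eventually_nhdsWithin_iff]
  filter_upwards [hJ] with s hs hs1
  have hs1' : s ≠ 1 := hs1
  have hs0 : s - 1 ≠ 0 := sub_ne_zero.mpr hs1'
  have eH : HH y s = (Complex.Gamma s * (riemannZeta₁ s - (s - 1) * deriv riemannZeta₁ s) * riemannZeta₁ s * y^(-s)) / (s-1)^3 := by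
    rw [HH, deriv_riemannZeta_eq_neg_inv_sub_sq_mul_add hs1', riemannZeta_eq_inv_sub_mul hs1']
    field_simp
    ring
  rw [eH, hs]
  field_simp
  ring


lemma gamma_pole (j : ℕ) : ∃ φ : ℂ → ℂ, AnalyticAt ℂ φ (-j) ∧ φ (-j) = (-1)^j / (j.factorial : ℂ) ∧
    ∀ᶠ s in 𝓝[≠] (-(j:ℂ)), Complex.Gamma s = φ s / (s + j) := by
  induction j with
  | zero =>
    refine ⟨fun s => Complex.Gamma (s + 1), ?_, by simp, ?_⟩
    · have h1 : AnalyticAt ℂ Complex.Gamma ((fun s : ℂ => s + 1) (-((0:ℕ):ℂ))) := by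
        simpa using gamma_analytic one_ne_neg_nat
      have h2 : AnalyticAt ℂ (fun s : ℂ => s + 1) (-((0:ℕ):ℂ)) := by fun_prop
      exact AnalyticAt.fun_comp (f := fun s : ℂ => s + 1) h1 h2
    · filter_upwards [self_mem_nhdsWithin] with s hs
      have hs0 : s ≠ 0 := by simpa using hs
      rw [Complex.Gamma_add_one s hs0]
      simp; field_simp
  | succ j ih =>
    obtain ⟨φ, h1, h2, h3⟩ := ih
    have hne : (-((j+1:ℕ):ℂ)) ≠ 0 := by rw [neg_ne_zero]; exact_mod_cast Nat.succ_ne_zero j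
    have hp : -((j+1:ℕ):ℂ) + 1 = -(j:ℂ) := by push_cast; ring
    refine ⟨fun s => φ (s + 1) / s, ?_, ?_, ?_⟩
    · have h1' : AnalyticAt ℂ φ ((fun s : ℂ => s + 1) (-((j+1:ℕ):ℂ))) := by
        simp only; rw [hp]; exact h1
      have h2 : AnalyticAt ℂ (fun s : ℂ => s + 1) (-((j+1:ℕ):ℂ)) := by fun_prop
      exact (AnalyticAt.fun_comp (f := fun s : ℂ => s + 1) h1' h2).fun_div analyticAt_id hne
    · simp only
      rw [hp, h2, Nat.factorial_succ, pow_succ]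
      have : ((j.factorial:ℕ):ℂ) ≠ 0 := by exact_mod_cast j.factorial_ne_zero
      have : ((j+1:ℕ):ℂ) ≠ 0 := by exact_mod_cast Nat.succ_ne_zero j
      push_cast at this ⊢
      have h5 : (-1 + -(j:ℂ)) ≠ 0 := by
        intro h; apply this; linear_combination -h
      field_simp
    · have ht : Tendsto (fun s : ℂ => s + 1) (𝓝[≠] (-((j+1:ℕ):ℂ))) (𝓝[≠] (-(j:ℂ))) := by
        apply tendsto_nhdsWithin_of_tendsto_nhds_of_eventually_within
        · have : Continuous (fun s : ℂ => s + 1) := by fun_prop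
          have := this.tendsto (-((j+1:ℕ):ℂ))
          rw [hp] at this
          exact this.mono_left nhdsWithin_le_nhds
        · filter_upwards [self_mem_nhdsWithin] with s hs
          intro h
          apply hs
          have : s + 1 = -(j:ℂ) := h
          rw [Set.mem_singleton_iff]
          push_cast
          linear_combination this
      have hs0 : ∀ᶠ s in 𝓝[≠] (-((j+1:ℕ):ℂ)), s ≠ 0 :=
        Filter.Eventually.filter_mono nhdsWithin_le_nhds (isOpen_ne.mem_nhds hne)
      filter_upwards [ht.eventually h3, hs0] with s hs hs0
      rw [Complex.Gamma_add_one s hs0] at hs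
      have : Complex.Gamma s = (s * Complex.Gamma s) / s := by field_simp
      rw [this, hs]
      push_cast
      rw [div_div, div_div]; ring_nf

lemma zeta_analytic {s : ℂ} (h : s ≠ 1) : AnalyticAt ℂ riemannZeta s :=
  DifferentiableOn.analyticAt (s := {s : ℂ | s ≠ 1})
    (fun _ hz => (differentiableAt_riemannZeta hz).differentiableWithinAt) (isOpen_ne.mem_nhds h)

lemma cpow_neg_analytic (y : ℂ) (hy : y ≠ 0) (p : ℂ) : AnalyticAt ℂ (fun s : ℂ => y ^ (-s)) p := by
  apply Differentiable.analyticAt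
  intro s
  exact ((hasDerivAt_neg s).const_cpow (Or.inl hy)).differentiableAt

lemma HH_analytic (y : ℂ) (hy : y ≠ 0) {s : ℂ} (h1 : s ≠ 1) (h2 : ∀ m : ℕ, s ≠ -m) :
    AnalyticAt ℂ (HH y) s :=
  ((gamma_analytic h2).fun_mul (zeta_analytic h1).deriv.fun_neg).fun_mul (zeta_analytic h1)
    |>.fun_mul (cpow_neg_analytic y hy s)

/-- the residue coefficient at `-j` -/
noncomputable def Rc (j : ℕ) : ℂ :=
  (-1)^j / (j.factorial : ℂ) * (-deriv riemannZeta (-j)) * riemannZeta (-j)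

lemma HH_pole (y : ℂ) (hy : y ≠ 0) (j : ℕ) : ∃ k : ℂ → ℂ, AnalyticAt ℂ k (-j) ∧
    ∀ᶠ s in 𝓝[≠] (-(j:ℂ)), HH y s = (Rc j * y ^ j) / (s + j) + k s := by
  obtain ⟨φ, h1, h2, h3⟩ := gamma_pole j
  have hz := zeta_analytic (one_ne_neg_nat j).symm
  set N : ℂ → ℂ := fun s => φ s * (-deriv riemannZeta s) * riemannZeta s * y^(-s) with hN
  have hNa : AnalyticAt ℂ N (-j) := ((h1.fun_mul hz.deriv.fun_neg).fun_mul hz).fun_mul (cpow_neg_analytic y hy _)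
  have hNv : N (-j) = Rc j * y ^ j := by
    rw [hN]; simp only
    rw [h2, neg_neg, Complex.cpow_natCast, Rc]
  refine ⟨_, analytic_dslope hNa, ?_⟩
  filter_upwards [h3, self_mem_nhdsWithin] with s hs hs'
  have hsj : s + j ≠ 0 := by
    intro h; apply hs'; rw [Set.mem_singleton_iff]; linear_combination h
  have e := eq_dslope N (-j) s
  have eH : HH y s = N s / (s + j) := by
    rw [HH, hs, hN]; simp only; field_simp
  rw [eH, e, hNv, sub_neg_eq_add]
  field_simp

/-- sum of principal parts -/
noncomputable def PP (a0 a1 A : ℂ) (R : ℕ → ℂ) (N : ℕ) (s : ℂ) : ℂ :=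
  a0 / (s-1)^3 + a1/(s-1)^2 + A/(s-1) + ∑ j ∈ Finset.range N, R j / (s + j)

lemma ana_pow_div (a : ℂ) (n : ℕ) {s p : ℂ} (h : s ≠ p) : AnalyticAt ℂ (fun s => a / (s - p)^n) s :=
  AnalyticAt.fun_div analyticAt_const (by fun_prop) (pow_ne_zero _ (sub_ne_zero.mpr h))

lemma ana_div (a : ℂ) {s p : ℂ} (h : s ≠ p) : AnalyticAt ℂ (fun s => a / (s - p)) s :=
  AnalyticAt.fun_div analyticAt_const (by fun_prop) (sub_ne_zero.mpr h)

lemma ana_div' (a : ℂ) {s : ℂ} (j : ℕ) (h : s ≠ -j) : AnalyticAt ℂ (fun s => a / (s + j)) s :=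
  AnalyticAt.fun_div analyticAt_const (by fun_prop) (by
    intro h'; apply h; linear_combination h')

lemma ana_sum (R : ℕ → ℂ) (F : Finset ℕ) {s : ℂ} (h : ∀ j ∈ F, s ≠ -j) :
    AnalyticAt ℂ (fun s => ∑ j ∈ F, R j / (s + j)) s :=
  Finset.analyticAt_fun_sum _ fun j hj => ana_div' _ _ (h j hj)

lemma ana_one (a0 a1 A : ℂ) {s : ℂ} (h : s ≠ 1) :
    AnalyticAt ℂ (fun s => a0 / (s-1)^3 + a1/(s-1)^2 + A/(s-1)) s :=
  ((ana_pow_div a0 3 h).fun_add (ana_pow_div a1 2 h)).fun_add (ana_div A h)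

lemma exists_regular (y : ℂ) (hy : y ≠ 0) (N : ℕ) : ∃ a0 a1 : ℂ, ∃ h : ℂ → ℂ,
    (∀ s : ℂ, -(N:ℝ) < s.re → DifferentiableAt ℂ h s) ∧
    ∀ s : ℂ, s ≠ 1 → (∀ m : ℕ, s ≠ -m) → h s = HH y s -
      PP a0 a1 (Complex.log y ^2/(2*y) + ((Real.pi : ℂ) ^ 2 / 12 - (Real.eulerMascheroniConstant : ℂ) ^ 2 / 2) / y)
        (fun j => Rc j * y ^ j) N s := by
  obtain ⟨a0, a1, k, hk, h1⟩ := HH_jet_one y hy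
  set A := (Complex.log y ^2/(2*y) + ((Real.pi : ℂ) ^ 2 / 12 - (Real.eulerMascheroniConstant : ℂ) ^ 2 / 2) / y)
  set R : ℕ → ℂ := fun j => Rc j * y ^ j with hR
  have hreg : ∀ s : ℂ, s ≠ 1 → (∀ m : ℕ, s ≠ -m) → AnalyticAt ℂ (fun s => HH y s - PP a0 a1 A R N s) s := by
    intro s hs1 hs2
    exact (HH_analytic y hy hs1 hs2).fun_sub ((ana_one a0 a1 A hs1).fun_add (ana_sum R _ fun j _ => hs2 j))
  obtain ⟨g, hg1, hg2⟩ := removable_glue {s : ℂ | -(N:ℝ) < s.re} (fun s => HH y s - PP a0 a1 A R N s) (by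
    intro s hs
    by_cases hs1 : s = 1
    · subst hs1
      refine ⟨fun s => k s - ∑ j ∈ Finset.range N, R j / (s + j),
        hk.fun_sub (ana_sum R _ fun j _ => one_ne_neg_nat j), ?_⟩
      filter_upwards [h1] with s e
      rw [e, PP]; ring
    by_cases hs2 : ∀ m : ℕ, s ≠ -m
    · exact ⟨_, hreg s hs1 hs2, EventuallyEq.rfl⟩
    · push Not at hs2
      obtain ⟨m, rfl⟩ := hs2
      have hmN : m < N := by
        have : -(N:ℝ) < (-(m:ℂ)).re := hs
        simp at this
        exact_mod_cast this
      obtain ⟨k', hk', h2⟩ := HH_pole y hy m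
      refine ⟨fun s => k' s - (a0 / (s-1)^3 + a1/(s-1)^2 + A/(s-1)) - ∑ j ∈ (Finset.range N).erase m, R j / (s + j),
        (hk'.fun_sub (ana_one a0 a1 A hs1)).fun_sub (ana_sum R _ fun j hj => ?_), ?_⟩
      · have := (Finset.mem_erase.mp hj).1
        intro h
        apply this
        have : (m:ℂ) = j := by linear_combination -h
        exact_mod_cast this.symm
      · filter_upwards [h2] with s e
        rw [e, PP, ← Finset.add_sum_erase _ _ (Finset.mem_range.mpr hmN)]; ring)
  refine ⟨a0, a1, g, hg1, fun s hs1 hs2 => ?_⟩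
  exact hg2 s (hreg s hs1 hs2).continuousAt

lemma shift_lemma (h : ℂ → ℂ) (a b : ℝ) (hab : a ≤ b)
    (hd : ∀ s : ℂ, a ≤ s.re → DifferentiableAt ℂ h s) (B : ℝ → ℝ) (hB : Tendsto B atTop (𝓝 0))
    (hb : ∀ s : ℂ, a ≤ s.re → s.re ≤ b → 2 ≤ |s.im| → ‖h s‖ ≤ B |s.im|) :
    Tendsto (fun T : ℝ => (∫ t in (-T)..T, h (b + t * Complex.I)) - ∫ t in (-T)..T, h (a + t * Complex.I))
      atTop (𝓝 0) := by
  have key : ∀ T : ℝ, 2 ≤ T → ‖(∫ t in (-T)..T, h (b + t * Complex.I)) - ∫ t in (-T)..T, h (a + t * Complex.I)‖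
      ≤ 2 * (B T * (b - a)) := by
    intro T hT
    have hr := Complex.integral_boundary_rect_eq_zero_of_differentiableOn h (a + (-T:ℝ) * Complex.I) (b + (T:ℝ) * Complex.I) (by
      intro s hs
      apply (hd s _).differentiableWithinAt
      have := hs.1
      simp only [Set.mem_preimage, line_re] at this
      rw [Set.uIcc_of_le hab] at this
      exact this.1)
    simp only [line_re, line_im] at hr
    set I1 := ∫ x in a..b, h (x + ((-T:ℝ):ℂ) * Complex.I)
    set I2 := ∫ x in a..b, h (x + (T:ℂ) * Complex.I)
    set V1 := ∫ t in (-T)..T, h (b + t * Complex.I)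
    set V2 := ∫ t in (-T)..T, h (a + t * Complex.I)
    have n1 : ‖I1‖ ≤ B T * (b - a) := by
      have := intervalIntegral.norm_integral_le_of_norm_le_const (a := a) (b := b) (C := B T)
        (f := fun x : ℝ => h (x + ((-T:ℝ):ℂ) * Complex.I)) (by
          intro x hx
          rw [Set.uIoc_of_le hab] at hx
          have := hb (x + ((-T:ℝ):ℂ) * Complex.I) (by rw [line_re]; exact hx.1.le) (by rw [line_re]; exact hx.2)
            (by rw [line_im, abs_neg, abs_of_nonneg (by linarith)]; exact hT)
          rwa [line_im, abs_neg, abs_of_nonneg (by linarith)] at this)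
      rwa [abs_of_nonneg (by linarith)] at this
    have n2 : ‖I2‖ ≤ B T * (b - a) := by
      have := intervalIntegral.norm_integral_le_of_norm_le_const (a := a) (b := b) (C := B T)
        (f := fun x : ℝ => h (x + (T:ℂ) * Complex.I)) (by
          intro x hx
          rw [Set.uIoc_of_le hab] at hx
          have := hb (x + (T:ℂ) * Complex.I) (by rw [line_re]; exact hx.1.le) (by rw [line_re]; exact hx.2)
            (by rw [line_im, abs_of_nonneg (by linarith)]; exact hT)
          rwa [line_im, abs_of_nonneg (by linarith)] at this)
      rwa [abs_of_nonneg (by linarith)] at this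
    simp only [smul_eq_mul] at hr
    have e : V1 - V2 = Complex.I * (I1 - I2) := by
      linear_combination (-Complex.I) * hr + (V1 - V2) * Complex.I_mul_I
    rw [e, norm_mul, Complex.norm_I, one_mul]
    have := norm_sub_le I1 I2
    linarith
  apply squeeze_zero_norm' (a := fun T => 2 * (B T * (b - a)))
  · filter_upwards [eventually_ge_atTop 2] with T hT using key T hT
  · simpa using (hB.mul_const (b-a)).const_mul 2

lemma line_ne {x : ℝ} (hx : x ≠ 0) (t : ℝ) : (x:ℂ) + t * Complex.I ≠ 0 := by
  intro h
  have := congrArg Complex.re h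
  rw [line_re] at this
  simp at this; exact hx this

lemma line_cont_div {x : ℝ} (hx : x ≠ 0) (n : ℕ) : Continuous fun t : ℝ => 1 / ((x:ℂ) + t * Complex.I)^n := by
  refine Continuous.div continuous_const (by fun_prop) fun t => pow_ne_zero _ (line_ne hx t)

lemma int_pow (x : ℝ) (hx : x ≠ 0) (n : ℕ) (hn : 1 ≤ n) :
    Tendsto (fun T : ℝ => ∫ t in (-T)..T, 1 / ((x:ℂ) + t * Complex.I)^(n+1)) atTop (𝓝 0) := by
  have hn0 : (n:ℂ) ≠ 0 := by exact_mod_cast (by omega : n ≠ 0)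
  have hd : ∀ t : ℝ, HasDerivAt (fun t : ℝ => Complex.I / n * (((x:ℂ) + t * Complex.I)^n)⁻¹)
      (1 / ((x:ℂ) + t * Complex.I)^(n+1)) t := by
    intro t
    have h1 : HasDerivAt (fun t : ℝ => (x:ℂ) + t * Complex.I) Complex.I t := by
      have := ((Complex.ofRealCLM.hasDerivAt (x := t)).mul_const Complex.I).const_add (x:ℂ)
      simpa using this
    have hne := line_ne hx t
    refine (((h1.fun_pow n).fun_inv (pow_ne_zero _ hne)).const_mul (Complex.I / n)).congr_deriv ?_
    obtain ⟨k, rfl⟩ : ∃ k, n = k + 1 := ⟨n - 1, by omega⟩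
    simp only [Nat.add_sub_cancel]
    have : (((k+1:ℕ):ℂ)) ≠ 0 := hn0
    generalize (x:ℂ) + t * Complex.I = w at hne
    field_simp
    linear_combination (-(w^(k+1))^2) * Complex.I_sq
  have e : ∀ T : ℝ, ∫ t in (-T)..T, 1 / ((x:ℂ) + t * Complex.I)^(n+1) =
      Complex.I / n * (((x:ℂ) + (T:ℝ) * Complex.I)^n)⁻¹ - Complex.I / n * (((x:ℂ) + ((-T:ℝ):ℂ) * Complex.I)^n)⁻¹ := by
    intro T
    exact intervalIntegral.integral_eq_sub_of_hasDerivAt (fun t _ => hd t) ((line_cont_div hx _).intervalIntegrable _ _)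
  have hz : ∀ F : Filter ℝ, Tendsto (fun t : ℝ => |t|) F atTop →
      Tendsto (fun t : ℝ => Complex.I / n * (((x:ℂ) + t * Complex.I)^n)⁻¹) F (𝓝 0) := by
    intro F hF
    have h2 : Tendsto (fun t : ℝ => (((x:ℂ) + t * Complex.I)^n)⁻¹) F (𝓝 0) := by
      rw [tendsto_zero_iff_norm_tendsto_zero]
      simp only [norm_inv, norm_pow]
      apply Tendsto.inv_tendsto_atTop
      apply (tendsto_pow_atTop (by omega)).comp
      refine tendsto_atTop_mono (fun t => ?_) hF
      have := Complex.abs_im_le_norm ((x:ℂ) + t * Complex.I)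
      rwa [line_im] at this
    simpa using h2.const_mul (Complex.I / n)
  simp_rw [e]
  have a1 := hz atTop tendsto_abs_atTop_atTop
  have a2 := (hz atBot tendsto_abs_atBot_atTop).comp tendsto_neg_atTop_atBot
  have := a1.sub a2
  rw [sub_zero] at this
  exact this

lemma int_inv (x : ℝ) (hx : x ≠ 0) (T : ℝ) :
    ∫ t in (-T)..T, 1 / ((x:ℂ) + t * Complex.I) = ((2 * Real.arctan (T / x) : ℝ) : ℂ) := by
  have hpos : ∀ t : ℝ, 0 < x^2 + t^2 := fun t => by positivity
  have hd : ∀ t : ℝ, HasDerivAt (fun t : ℝ => ((Real.arctan (t/x) : ℝ):ℂ) - Complex.I/2 * ((Real.log (x^2+t^2):ℝ):ℂ))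
      (1 / ((x:ℂ) + t * Complex.I)) t := by
    intro t
    have h1 := (((hasDerivAt_id t).div_const x).arctan).ofReal_comp
    have h2 := ((((hasDerivAt_id t).fun_pow 2).const_add (x^2)).log (hpos t).ne').ofReal_comp
    refine (h1.sub (h2.const_mul (Complex.I/2))).congr_deriv ?_
    simp only [id]
    have e : ((x:ℂ)^2 + (t:ℂ)^2) ≠ 0 := by exact_mod_cast (hpos t).ne'
    have hx' : (x:ℂ) ≠ 0 := by exact_mod_cast hx
    have e2 : (1 + ((t:ℂ)/x)^2) ≠ 0 := by
      have : (1 + (t/x)^2) ≠ 0 := by positivity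
      exact_mod_cast this
    have e3 := line_ne hx t
    have e4 : (1 / (1 + ((t:ℂ)/x)^2)) * (1/x) = x / ((x:ℂ)^2 + (t:ℂ)^2) := by
      field_simp
    push_cast
    rw [e4]
    rw [eq_div_iff e3]
    field_simp
    ring_nf
    rw [Complex.I_sq]; ring
  have hc : Continuous fun t : ℝ => 1 / ((x:ℂ) + t * Complex.I) := by simpa using line_cont_div hx 1
  rw [intervalIntegral.integral_eq_sub_of_hasDerivAt (fun t _ => hd t) (hc.intervalIntegrable _ _)]
  rw [neg_sq, neg_div, Real.arctan_neg]
  push_cast; ring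

lemma int_inv_pos (x : ℝ) (hx : 0 < x) :
    Tendsto (fun T : ℝ => ∫ t in (-T)..T, 1 / ((x:ℂ) + t * Complex.I)) atTop (𝓝 Real.pi) := by
  simp_rw [int_inv x hx.ne']
  have h1 : Tendsto (fun T : ℝ => T / x) atTop atTop := tendsto_id.atTop_div_const hx
  have h2 := ((Real.tendsto_arctan_atTop.mono_right nhdsWithin_le_nhds).comp h1).const_mul 2
  rw [show 2 * (Real.pi/2) = Real.pi by ring] at h2
  exact (Complex.continuous_ofReal.tendsto _).comp h2

lemma int_inv_neg (x : ℝ) (hx : x < 0) :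
    Tendsto (fun T : ℝ => ∫ t in (-T)..T, 1 / ((x:ℂ) + t * Complex.I)) atTop (𝓝 (-Real.pi)) := by
  simp_rw [int_inv x hx.ne]
  have h1 : Tendsto (fun T : ℝ => T / x) atTop atBot := tendsto_id.atTop_div_const_of_neg hx
  have h2 := ((Real.tendsto_arctan_atBot.mono_right nhdsWithin_le_nhds).comp h1).const_mul 2
  rw [show 2 * (-(Real.pi/2)) = -Real.pi by ring] at h2
  have := (Complex.continuous_ofReal.tendsto _).comp h2
  rw [Complex.ofReal_neg] at this
  exact this

lemma HH_strip (lam : ℝ) (hl : 0 < lam) (hl2 : lam < Real.pi / 2) (a b : ℝ) :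
    ∃ δ > 0, ∃ C > 0, ∀ y : ℂ, y ≠ 0 → |y.arg| ≤ lam → ∀ s : ℂ, a ≤ s.re → s.re ≤ b → 2 ≤ |s.im| →
      ‖HH y s‖ ≤ C * ‖y‖^(-s.re) * Real.exp (-δ * |s.im|) := by
  set d := Real.pi/2 - lam with hd
  have hd0 : 0 < d := by linarith
  obtain ⟨C1, hC1, h1⟩ := Gamma_strip (θ := Real.pi/2 - d/8) (by linarith) (by linarith) a b
  obtain ⟨C2, hC2, h2⟩ := zeta_strip (ε := d/8) (by linarith) a b
  obtain ⟨C3, hC3, h3⟩ := zeta_deriv_strip (ε := d/8) (by linarith) a b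
  refine ⟨5*d/8, by linarith, C1*C2*C3, by positivity, fun y hy hya s ha hb hs => ?_⟩
  have e1 := h1 s ha hb (by linarith)
  have e2 := h2 s ha hb (by linarith)
  have e3 := h3 s ha hb hs
  have e4 := norm_cpow_neg_le (s := s) hy hya
  rw [HH, norm_mul, norm_mul, norm_mul, norm_neg]
  set t := |s.im|
  calc _ ≤ (C1 * Real.exp (-(Real.pi/2 - d/8) * t)) * (C3 * Real.exp (d/8*t)) * (C2 * Real.exp (d/8*t)) *
        (‖y‖^(-s.re) * Real.exp (lam * t)) := by gcongr
    _ = C1*C2*C3*‖y‖^(-s.re) * (Real.exp (-(Real.pi/2 - d/8) * t) * Real.exp (d/8*t) * Real.exp (d/8*t) * Real.exp (lam * t)) := by ring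
    _ = _ := by
      rw [← Real.exp_add, ← Real.exp_add, ← Real.exp_add]
      congr 2
      rw [hd]; ring

lemma line_ne_one {c : ℝ} (hc : c ≠ 1) (t : ℝ) : (c:ℂ) + t * Complex.I ≠ 1 := by
  intro h
  have := congrArg Complex.re h
  rw [line_re] at this; simp at this; exact hc this

lemma line_ne_neg {c : ℝ} (hc : ∀ m : ℕ, c ≠ -m) (t : ℝ) (m : ℕ) : (c:ℂ) + t * Complex.I ≠ -m := by
  intro h
  have := congrArg Complex.re h
  rw [line_re] at this; simp at this; exact hc m this

lemma HH_line_cont (y : ℂ) (hy : y ≠ 0) {c : ℝ} (hc : c ≠ 1) (hc2 : ∀ m : ℕ, c ≠ -m) :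
    Continuous fun t : ℝ => HH y (c + t * Complex.I) := by
  rw [continuous_iff_continuousAt]
  intro t
  exact ContinuousAt.comp (f := fun t : ℝ => (c:ℂ) + t * Complex.I)
    (HH_analytic y hy (line_ne_one hc t) (line_ne_neg hc2 t)).continuousAt (line_cont c).continuousAt

lemma HH_line (lam : ℝ) (hl : 0 < lam) (hl2 : lam < Real.pi / 2) {c : ℝ} (hc : c ≠ 1) (hc2 : ∀ m : ℕ, c ≠ -m) :
    ∃ δ > 0, ∃ C > 0, ∀ y : ℂ, y ≠ 0 → |y.arg| ≤ lam → ∀ t : ℝ,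
      ‖HH y (c + t * Complex.I)‖ ≤ C * ‖y‖^(-c) * Real.exp (-δ * |t|) := by
  obtain ⟨δ, hδ, C, hC, h⟩ := HH_strip lam hl hl2 c c
  have hcont := (HH_line_cont 1 one_ne_zero hc hc2).norm
  obtain ⟨M, hM⟩ := (isCompact_Icc (a := (-2:ℝ)) (b := 2)).exists_bound_of_continuousOn hcont.continuousOn
  have hM0 : 0 ≤ M := (norm_nonneg _).trans (hM 0 (by constructor <;> norm_num))
  refine ⟨δ, hδ, C + M * Real.exp (lam * 2) * Real.exp (δ * 2), by positivity, fun y hy hya t => ?_⟩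
  by_cases ht : 2 ≤ |t|
  · have := h y hy hya (c + t * Complex.I) (by simp) (by simp) (by rw [line_im]; exact ht)
    rw [line_re, line_im] at this
    refine this.trans ?_
    have h0 : 0 ≤ M * Real.exp (lam * 2) * Real.exp (δ * 2) := by positivity
    gcongr
    linarith
  · push Not at ht
    have e1 := hM t (by rw [abs_lt] at ht; exact ⟨ht.1.le, ht.2.le⟩)
    have e2 := norm_cpow_neg_le (s := c + t * Complex.I) hy hya
    rw [norm_norm] at e1
    rw [line_re, line_im] at e2
    have e3 : HH y (c + t * Complex.I) = HH 1 (c + t * Complex.I) * y ^ (-(c + t * Complex.I)) := by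
      rw [HH, HH, Complex.one_cpow, mul_one]
    rw [e3, norm_mul]
    have e4 : 1 ≤ Real.exp (δ * 2) * Real.exp (-δ * |t|) := by
      rw [← Real.exp_add]; apply Real.one_le_exp; nlinarith
    have e5 : Real.exp (lam * |t|) ≤ Real.exp (lam * 2) := by gcongr
    calc _ ≤ M * (‖y‖^(-c) * Real.exp (lam * 2)) := by gcongr; exact e2.trans (by gcongr)
      _ ≤ M * (‖y‖^(-c) * Real.exp (lam * 2)) * (Real.exp (δ * 2) * Real.exp (-δ * |t|)) :=
          le_mul_of_one_le_right (by positivity) e4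
      _ = (M * Real.exp (lam * 2) * Real.exp (δ * 2)) * ‖y‖^(-c) * Real.exp (-δ * |t|) := by ring
      _ ≤ _ := by gcongr; linarith

lemma HH_line_int (lam : ℝ) (hl : 0 < lam) (hl2 : lam < Real.pi / 2) {c : ℝ} (hc : c ≠ 1) (hc2 : ∀ m : ℕ, c ≠ -m) :
    ∃ C > 0, ∀ y : ℂ, y ≠ 0 → |y.arg| ≤ lam →
      Integrable (fun t : ℝ => HH y (c + t * Complex.I)) ∧
      ‖∫ t : ℝ, HH y (c + t * Complex.I)‖ ≤ C * ‖y‖^(-c) := by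
  obtain ⟨δ, hδ, C, hC, h⟩ := HH_line lam hl hl2 hc hc2
  have hi := exp_abs_integrable hδ
  have h0 : 0 ≤ ∫ t : ℝ, Real.exp (-δ * |t|) := integral_nonneg fun t => (Real.exp_pos _).le
  refine ⟨C * (∫ t : ℝ, Real.exp (-δ * |t|)) + 1, by positivity, fun y hy hya => ⟨?_, ?_⟩⟩
  · exact Integrable.mono' (hi.const_mul (C * ‖y‖^(-c))) (HH_line_cont y hy hc hc2).aestronglyMeasurable
      (Eventually.of_forall (h y hy hya))
  · have := norm_integral_le_of_norm_le (hi.const_mul (C * ‖y‖^(-c))) (Eventually.of_forall (h y hy hya))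
    rw [integral_const_mul] at this
    refine this.trans ?_
    have : 0 ≤ ‖y‖^(-c) := by positivity
    nlinarith

lemma PP_line (a0 a1 A : ℂ) (R : ℕ → ℂ) (N : ℕ) (c : ℝ) (L : ℂ)
    (hL : ∀ x : ℝ, (x = c - 1 ∨ ∃ j < N, x = c + (j:ℝ)) → x ≠ 0 ∧
      Tendsto (fun T : ℝ => ∫ t in (-T)..T, 1 / ((x:ℂ) + t * Complex.I)) atTop (𝓝 L)) :
    (∀ T : ℝ, IntervalIntegrable (fun t : ℝ => PP a0 a1 A R N (c + t * Complex.I)) volume (-T) T) ∧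
    Tendsto (fun T : ℝ => ∫ t in (-T)..T, PP a0 a1 A R N (c + t * Complex.I)) atTop
      (𝓝 (L * (A + ∑ j ∈ Finset.range N, R j))) := by
  obtain ⟨hx, hx1⟩ := hL (c-1) (Or.inl rfl)
  have hj : ∀ j ∈ Finset.range N, (c + (j:ℝ)) ≠ 0 ∧
      Tendsto (fun T : ℝ => ∫ t in (-T)..T, 1 / (((c + (j:ℝ) : ℝ):ℂ) + t * Complex.I)) atTop (𝓝 L) :=
    fun j hj => hL _ (Or.inr ⟨j, Finset.mem_range.mp hj, rfl⟩)
  have e : ∀ t : ℝ, PP a0 a1 A R N (c + t * Complex.I) =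
      a0 * (1 / (((c-1:ℝ):ℂ) + t * Complex.I)^(2+1)) + a1 * (1 / (((c-1:ℝ):ℂ) + t * Complex.I)^(1+1))
      + A * (1 / (((c-1:ℝ):ℂ) + t * Complex.I)) + ∑ j ∈ Finset.range N, R j * (1 / (((c + (j:ℝ) : ℝ):ℂ) + t * Complex.I)) := by
    intro t
    rw [PP]
    have h1 : (c:ℂ) + t * Complex.I - 1 = ((c-1:ℝ):ℂ) + t * Complex.I := by push_cast; ring
    have h2 : ∀ j : ℕ, (c:ℂ) + t * Complex.I + j = ((c + (j:ℝ) : ℝ):ℂ) + t * Complex.I := by intro j; push_cast; ring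
    simp only [h1, h2, mul_one_div]
  have c3 := fun a b => ((line_cont_div hx (2+1)).const_mul a0).intervalIntegrable (μ := volume) a b
  have c2 := fun a b => ((line_cont_div hx (1+1)).const_mul a1).intervalIntegrable (μ := volume) a b
  have c1 : ∀ a b, IntervalIntegrable (fun t : ℝ => A * (1 / (((c-1:ℝ):ℂ) + t * Complex.I))) volume a b := fun a b => by
    have := ((line_cont_div hx 1).const_mul A).intervalIntegrable (μ := volume) a b
    simpa only [pow_one] using this
  have cj : ∀ j ∈ Finset.range N, ∀ a b, IntervalIntegrable (fun t : ℝ => R j * (1 / (((c + (j:ℝ) : ℝ):ℂ) + t * Complex.I))) volume a b := fun j h a b => by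
    have := ((line_cont_div (hj j h).1 1).const_mul (R j)).intervalIntegrable (μ := volume) a b
    simpa only [pow_one] using this
  have cs : ∀ a b, IntervalIntegrable (fun t : ℝ => ∑ j ∈ Finset.range N, R j * (1 / (((c + (j:ℝ) : ℝ):ℂ) + t * Complex.I))) volume a b :=
    fun a b => by
      have := IntervalIntegrable.sum (Finset.range N) (fun j h => cj j h a b)
      refine this.congr ?_
      intro t _
      simp
  simp_rw [e]
  refine ⟨fun T => (((c3 _ _).add (c2 _ _)).add (c1 _ _)).add (cs _ _), ?_⟩
  have e2 : ∀ T : ℝ, ∫ t in (-T)..T, (a0 * (1 / (((c-1:ℝ):ℂ) + t * Complex.I)^(2+1)) + a1 * (1 / (((c-1:ℝ):ℂ) + t * Complex.I)^(1+1))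
      + A * (1 / (((c-1:ℝ):ℂ) + t * Complex.I)) + ∑ j ∈ Finset.range N, R j * (1 / (((c + (j:ℝ) : ℝ):ℂ) + t * Complex.I)))
      = a0 * (∫ t in (-T)..T, (1 / (((c-1:ℝ):ℂ) + t * Complex.I)^(2+1)))
      + a1 * (∫ t in (-T)..T, (1 / (((c-1:ℝ):ℂ) + t * Complex.I)^(1+1)))
      + A * (∫ t in (-T)..T, (1 / (((c-1:ℝ):ℂ) + t * Complex.I)))
      + ∑ j ∈ Finset.range N, R j * (∫ t in (-T)..T, (1 / (((c + (j:ℝ) : ℝ):ℂ) + t * Complex.I))) := by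
    intro T
    rw [intervalIntegral.integral_add (((c3 _ _).add (c2 _ _)).add (c1 _ _)) (cs _ _),
      intervalIntegral.integral_add ((c3 _ _).add (c2 _ _)) (c1 _ _),
      intervalIntegral.integral_add (c3 _ _) (c2 _ _),
      intervalIntegral.integral_finsetSum (fun j h => cj j h _ _)]
    simp only [intervalIntegral.integral_const_mul]
  simp_rw [e2]
  have t1 := (((int_pow _ hx 2 (by norm_num)).const_mul a0).add ((int_pow _ hx 1 le_rfl).const_mul a1)).add (hx1.const_mul A)
  have t2 := tendsto_finset_sum (Finset.range N) (fun j h => (hj j h).2.const_mul (R j))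
  have := t1.add t2
  refine this.trans (le_of_eq ?_)
  congr 1
  rw [← Finset.sum_mul]; ring

lemma PP_strip (a0 a1 A : ℂ) (R : ℕ → ℂ) (N : ℕ) (s : ℂ) (hs : 2 ≤ |s.im|) :
    ‖PP a0 a1 A R N s‖ ≤ (‖a0‖ + ‖a1‖ + ‖A‖ + ∑ j ∈ Finset.range N, ‖R j‖) / |s.im| := by
  have h0 : 0 < |s.im| := by linarith
  have h1 : |s.im| ≤ ‖s - 1‖ := by
    have := Complex.abs_im_le_norm (s - 1)
    simpa using this
  have h2 : ∀ j : ℕ, |s.im| ≤ ‖s + j‖ := by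
    intro j
    have := Complex.abs_im_le_norm (s + j)
    simpa using this
  have hp : ∀ n : ℕ, n ≠ 0 → |s.im| ≤ ‖s - 1‖ ^ n := fun n hn =>
    h1.trans (le_self_pow₀ (by linarith) hn)
  rw [PP, add_div, add_div, add_div, Finset.sum_div]
  refine (norm_add_le _ _).trans (add_le_add ((norm_add_le _ _).trans (add_le_add ((norm_add_le _ _).trans (add_le_add ?_ ?_)) ?_))
    ((norm_sum_le _ _).trans (Finset.sum_le_sum fun j _ => ?_)))
  · rw [norm_div, norm_pow]
    exact div_le_div_of_nonneg_left (norm_nonneg _) h0 (hp 3 (by norm_num))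
  · rw [norm_div, norm_pow]
    exact div_le_div_of_nonneg_left (norm_nonneg _) h0 (hp 2 (by norm_num))
  · rw [norm_div]
    exact div_le_div_of_nonneg_left (norm_nonneg _) h0 h1
  · rw [norm_div]
    exact div_le_div_of_nonneg_left (norm_nonneg _) h0 (h2 j)

lemma half_ne (N : ℕ) : ((1/2 - N : ℝ) ≠ 1) ∧ ∀ m : ℕ, (1/2 - N : ℝ) ≠ -m := by
  constructor
  · intro h
    have h2 : (1:ℝ) = 2 + 2 * N := by linarith
    have : (1:ℕ) = 2 + 2 * N := by exact_mod_cast h2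
    omega
  · intro m h
    have h2 : (1:ℝ) + 2 * m = 2 * N := by linarith
    have : (1:ℕ) + 2 * m = 2 * N := by exact_mod_cast h2
    omega

lemma contour (lam : ℝ) (hl : 0 < lam) (hl2 : lam < Real.pi / 2) (N : ℕ) (y : ℂ) (hy : y ≠ 0)
    (hy1 : ‖y‖ ≤ 1) (hya : |y.arg| ≤ lam) :
    (∫ t : ℝ, HH y (((2:ℝ):ℂ) + t * Complex.I)) - ∫ t : ℝ, HH y (((1/2 - N : ℝ) : ℂ) + t * Complex.I)
     = 2 * Real.pi * ((Complex.log y ^2/(2*y) + ((Real.pi : ℂ) ^ 2 / 12 - (Real.eulerMascheroniConstant : ℂ) ^ 2 / 2) / y)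
      + ∑ j ∈ Finset.range N, Rc j * y ^ j) := by
  obtain ⟨a0, a1, h, hd, hh⟩ := exists_regular y hy N
  set A := (Complex.log y ^2/(2*y) + ((Real.pi : ℂ) ^ 2 / 12 - (Real.eulerMascheroniConstant : ℂ) ^ 2 / 2) / y)
  set R : ℕ → ℂ := fun j => Rc j * y ^ j with hR
  set c : ℝ := 1/2 - N with hc
  obtain ⟨hc1, hc2⟩ := half_ne N
  have h21 : (2:ℝ) ≠ 1 := by norm_num
  have h22 : ∀ m : ℕ, (2:ℝ) ≠ -m := fun m => by
    have : (0:ℝ) ≤ m := m.cast_nonneg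
    intro h; linarith
  have hN0 : (0:ℝ) ≤ N := N.cast_nonneg
  obtain ⟨δ, hδ, C, hC, hs⟩ := HH_strip lam hl hl2 c 2
  set M := ‖a0‖ + ‖a1‖ + ‖A‖ + ∑ j ∈ Finset.range N, ‖R j‖ with hM
  have hyp : 0 < ‖y‖ := norm_pos_iff.mpr hy
  have hshift := shift_lemma h c 2 (by rw [hc]; linarith) (fun s hs => hd s (by rw [hc] at hs; linarith))
    (fun T => C * ‖y‖^(-2:ℝ) * Real.exp (-δ * T) + M / T) (by
      have e1 : Tendsto (fun T : ℝ => -δ * T) atTop atBot :=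
        tendsto_id.const_mul_atTop_of_neg (by linarith)
      have e2 := (Real.tendsto_exp_atBot.comp e1).const_mul (C * ‖y‖^(-2:ℝ))
      have e3 : Tendsto (fun T : ℝ => M / T) atTop (𝓝 0) := tendsto_const_nhds.div_atTop tendsto_id
      simpa using e2.add e3) (by
      intro s h1 h2 h3
      have n1 : s ≠ 1 := by
        rintro rfl; simp at h3; linarith
      have n2 : ∀ m : ℕ, s ≠ -m := by
        intro m hm
        rw [hm] at h3; simp at h3; linarith
      rw [hh s n1 n2]
      refine (norm_sub_le _ _).trans (add_le_add ((hs y hy hya s h1 h2 h3).trans ?_) (PP_strip _ _ _ _ _ _ h3))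
      have : ‖y‖^(-s.re) ≤ ‖y‖^(-2:ℝ) := Real.rpow_le_rpow_of_exponent_ge hyp hy1 (by linarith)
      gcongr)
  have lim : ∀ (x : ℝ) (L : ℂ), x ≠ 1 → (∀ m : ℕ, x ≠ -m) →
      (∀ z : ℝ, (z = x - 1 ∨ ∃ j < N, z = x + (j:ℝ)) → z ≠ 0 ∧
      Tendsto (fun T : ℝ => ∫ t in (-T)..T, 1 / ((z:ℂ) + t * Complex.I)) atTop (𝓝 L)) →
      Tendsto (fun T : ℝ => ∫ t in (-T)..T, h (x + t * Complex.I)) atTop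
       (𝓝 ((∫ t : ℝ, HH y (x + t * Complex.I)) - L * (A + ∑ j ∈ Finset.range N, R j))) := by
    intro x L hx1 hx2 hL
    obtain ⟨p1, p2⟩ := PP_line a0 a1 A R N x L hL
    obtain ⟨_, _, q⟩ := HH_line_int lam hl hl2 hx1 hx2
    obtain ⟨q1, -⟩ := q y hy hya
    have q2 := intervalIntegral_tendsto_integral q1 tendsto_neg_atTop_atBot tendsto_id
    refine (q2.sub p2).congr fun T => ?_
    simp only [id]
    rw [← intervalIntegral.integral_sub q1.intervalIntegrable (p1 T)]
    refine intervalIntegral.integral_congr fun t _ => ?_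
    rw [hh]
    · exact line_ne_one hx1 t
    · exact fun m => line_ne_neg hx2 t m
  have l2 := lim 2 Real.pi h21 h22 (by
    have key : ∀ z : ℝ, 0 < z → z ≠ 0 ∧
      Tendsto (fun T : ℝ => ∫ t in (-T)..T, 1 / ((z:ℂ) + t * Complex.I)) atTop (𝓝 (Real.pi:ℂ)) :=
      fun z hz => ⟨hz.ne', int_inv_pos z hz⟩
    rintro z (rfl | ⟨j, -, rfl⟩)
    · exact key _ (by norm_num)
    · exact key _ (by positivity))
  have l1 := lim c (-Real.pi) hc1 hc2 (by
    have key : ∀ z : ℝ, z < 0 → z ≠ 0 ∧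
      Tendsto (fun T : ℝ => ∫ t in (-T)..T, 1 / ((z:ℂ) + t * Complex.I)) atTop (𝓝 (-Real.pi:ℂ)) :=
      fun z hz => ⟨hz.ne, int_inv_neg z hz⟩
    rintro z (rfl | ⟨j, hj, rfl⟩)
    · exact key _ (by rw [hc]; linarith)
    · have : (j:ℝ) + 1 ≤ N := by exact_mod_cast hj
      exact key _ (by rw [hc]; linarith))
  have := tendsto_nhds_unique hshift (l2.sub l1)
  linear_combination -this

lemma Rc_zero : Rc 0 = -(1/4) * Complex.log (2 * (Real.pi : ℂ)) := by
  simp only [Rc, pow_zero, Nat.factorial_zero, Nat.cast_one, Nat.cast_zero, neg_zero,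
    riemannZeta_zero, deriv_riemannZeta_zero]
  ring

lemma Rc_even (k : ℕ) (hk : 1 ≤ k) : Rc (2 * k) = 0 := by
  obtain ⟨n, rfl⟩ : ∃ n, k = n + 1 := ⟨k - 1, by omega⟩
  have := riemannZeta_neg_two_mul_nat_add_one n
  rw [Rc, show -((2 * (n+1) : ℕ) : ℂ) = -2 * (n+1) by push_cast; ring, this, mul_zero]

lemma Rc_odd (k : ℕ) (hk : 1 ≤ k) : Rc (2 * k - 1) =
    deriv riemannZeta (1 - 2 * (k:ℂ)) * riemannZeta (1 - 2 * (k:ℂ)) / ((2 * k - 1).factorial : ℂ) := by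
  have : -((2 * k - 1 : ℕ) : ℂ) = 1 - 2 * (k:ℂ) := by
    rw [Nat.cast_sub (by omega)]; push_cast; ring
  rw [Rc, this, Odd.neg_one_pow ⟨k - 1, by omega⟩]
  ring

lemma Rc_one : Rc 1 = (1/12) * ((logGlaisher : ℂ) - 1/12) := by
  have h := Rc_odd 1 le_rfl
  have z := zeta_odd_val 1 le_rfl
  norm_num [bernoulli_two] at h z
  rw [h, zeta_deriv_neg_one, z]
  ring

lemma Rc_sum (m : ℕ) (hm : 2 ≤ m) (y : ℂ) : ∑ j ∈ Finset.range (2 * m), Rc j * y ^ j =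
    Rc 0 + Rc 1 * y + ∑ k ∈ Finset.Icc 2 (m - 1), Rc (2 * k - 1) * y ^ (2 * k - 1)
     + Rc (2 * m - 1) * y ^ (2 * m - 1) := by
  induction m, hm using Nat.le_induction with
  | base =>
    have := Rc_even 1 le_rfl
    simp only [mul_one] at this
    simp [Finset.sum_range_succ, this]
  | succ n hn ih =>
    rw [show 2 * (n+1) = 2 * n + 1 + 1 by ring, Finset.sum_range_succ, Finset.sum_range_succ, ih,
      Rc_even n (by omega)]
    obtain ⟨p, rfl⟩ : ∃ p, n = p + 1 := ⟨n - 1, by omega⟩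
    simp only [Nat.add_sub_cancel]
    rw [Finset.sum_Icc_succ_top (b := p) (by omega)]
    ring

theorem stmt3 (m : ℕ) (hm : 2 ≤ m) (lam : ℝ) (hl : 0 < lam) (hl2 : lam < Real.pi / 2) :
    ∃ C > 0, ∃ r > 0, ∀ y : ℂ, 0 < ‖y‖ → ‖y‖ ≤ r → |Complex.arg y| ≤ lam →
      ‖(∑' n : ℕ, Complex.log ((n : ℂ) + 1) / (Complex.exp (((n : ℂ) + 1) * y) - 1))
        - ((Complex.log y) ^ 2 / (2 * y)
          + ((Real.pi : ℂ) ^ 2 / 12 - (eulerGamma : ℂ) ^ 2 / 2) / y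
          - (1/4) * Complex.log (2 * (Real.pi : ℂ))
          + (y / 12) * ((logGlaisher : ℂ) - 1 / 12)
          + ∑ k ∈ Finset.Icc 2 (m - 1),
              ((bernoulli (2 * k) : ℂ) * y ^ (2 * k - 1) / (k : ℂ)) *
                ((bernoulli (2 * k) : ℂ) / (2 * (Nat.factorial (2 * k) : ℂ))
                    * ((eulerGamma : ℂ) - (∑ j ∈ Finset.Icc 1 (2 * k - 1), 1 / (j : ℂ))
                      + Complex.log (2 * (Real.pi : ℂ)))
                  + (-1) ^ k * deriv riemannZeta (2 * (k : ℂ)) / (2 * (Real.pi : ℂ)) ^ (2 * k)))‖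
        ≤ C * ‖y‖ ^ (2 * m - 1) := by
  obtain ⟨hc1, hc2⟩ := half_ne (2 * m)
  obtain ⟨C, hC, hIint⟩ := HH_line_int lam hl hl2 hc1 hc2
  refine ⟨‖Rc (2 * m - 1)‖ + C, by positivity, 1, one_pos, fun y hy0 hy1 hya => ?_⟩
  have hy : y ≠ 0 := norm_pos_iff.mp hy0
  have hre : 0 < y.re := by
    have := (Complex.abs_arg_lt_pi_div_two_iff (z := y)).mp (by linarith)
    tauto
  have hcont := contour lam hl hl2 (2 * m) y hy hy1 hya
  obtain ⟨-, hI⟩ := hIint y hy hya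
  rw [(S_hasSum y hre).tsum_eq]
  rw [Complex.ofReal_ofNat] at hcont
  set I2 := ∫ t : ℝ, HH y (2 + t * Complex.I)
  set Ic := ∫ t : ℝ, HH y (((1/2 - (2 * m : ℕ) : ℝ) : ℂ) + t * Complex.I)
  rw [Rc_sum m hm, Rc_zero, Rc_one] at hcont
  have hsum : ∑ k ∈ Finset.Icc 2 (m - 1), Rc (2 * k - 1) * y ^ (2 * k - 1) =
      ∑ k ∈ Finset.Icc 2 (m - 1),
              ((bernoulli (2 * k) : ℂ) * y ^ (2 * k - 1) / (k : ℂ)) *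
                ((bernoulli (2 * k) : ℂ) / (2 * (Nat.factorial (2 * k) : ℂ))
                    * ((eulerGamma : ℂ) - (∑ j ∈ Finset.Icc 1 (2 * k - 1), 1 / (j : ℂ))
                      + Complex.log (2 * (Real.pi : ℂ)))
                  + (-1) ^ k * deriv riemannZeta (2 * (k : ℂ)) / (2 * (Real.pi : ℂ)) ^ (2 * k)) := by
    refine Finset.sum_congr rfl fun k hk => ?_
    have hk1 : 1 ≤ k := by have := (Finset.mem_Icc.mp hk).1; omega
    rw [Rc_odd k hk1, residue_odd k hk1]
    ring
  rw [hsum] at hcont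
  have hpi : (Real.pi : ℂ) ≠ 0 := by exact_mod_cast Real.pi_ne_zero
  have hI2 : (1 / (2 * Real.pi) : ℂ) * I2 = (1 / (2 * Real.pi) : ℂ) * Ic
      + (1 / (2 * Real.pi) : ℂ) * (I2 - Ic) := by ring
  rw [hI2, hcont, ← mul_assoc (1 / (2 * Real.pi) : ℂ), one_div_mul_cancel (by simpa using hpi), one_mul,
    show eulerGamma = Real.eulerMascheroniConstant from rfl]
  set X := ∑ k ∈ Finset.Icc 2 (m - 1), (_ : ℂ)
  refine le_trans (le_of_eq (congrArg norm (?_ : _ = Rc (2 * m - 1) * y ^ (2 * m - 1) + (1 / (2 * Real.pi) : ℂ) * Ic))) ?_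
  · ring
  refine (norm_add_le _ _).trans ?_
  rw [add_mul]
  refine add_le_add (by rw [norm_mul, norm_pow]) ?_
  have h1 : ‖(1 / (2 * Real.pi) : ℂ)‖ ≤ 1 := by
    have : (1 / (2 * Real.pi) : ℂ) = ((1 / (2 * Real.pi) : ℝ) : ℂ) := by push_cast; rfl
    rw [this, Complex.norm_real, Real.norm_of_nonneg (by positivity)]
    rw [div_le_one (by positivity)]
    linarith [Real.pi_gt_three]
  have h2 : ‖y‖ ^ (-(1/2 - (2 * m : ℕ) : ℝ)) ≤ ‖y‖ ^ (2 * m - 1) := by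
    rw [← Real.rpow_natCast]
    refine Real.rpow_le_rpow_of_exponent_ge hy0 hy1 ?_
    rw [Nat.cast_sub (by omega)]
    push_cast; linarith
  rw [norm_mul]
  calc _ ≤ 1 * (C * ‖y‖ ^ (-(1/2 - (2 * m : ℕ) : ℝ))) := mul_le_mul h1 hI (norm_nonneg _) one_pos.le
    _ ≤ _ := by rw [one_mul]; gcongr
end

section
/- Let w ∈ ℂ with Re(w) > 0. Then Σ_{k=0}^∞ ( ψ(2k+1)/(2k)! ) w^{2k} = sinh(w) Shi(w) − cosh(w) Chi(w) + log(w) cosh(w), where ψ(2k+1) = −γ + Σ_{j=1}^{2k} 1/j. -/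
open Filter Topology MeasureTheory

noncomputable def Shi (w : ℂ) : ℂ := ∫ s in (0:ℝ)..1, Complex.sinh ((s : ℂ) * w) / (s : ℂ)

noncomputable def Chi (w : ℂ) : ℂ :=
  (eulerGamma : ℂ) + Complex.log w + ∫ s in (0:ℝ)..1, (Complex.cosh ((s : ℂ) * w) - 1) / (s : ℂ)


lemma aux_integrable (f : ℝ → ℂ) (hf : Differentiable ℝ f) (h0 : f 0 = 0) :
    IntervalIntegrable (fun s : ℝ => f s / (s : ℂ)) volume 0 1 := by
  have hc : Continuous (dslope f 0) := by
    rw [← continuousOn_univ]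
    exact (continuousOn_dslope Filter.univ_mem).2 ⟨hf.continuous.continuousOn, hf 0⟩
  refine (hc.intervalIntegrable 0 1).congr ?_
  intro s hs
  have hs' : s ≠ 0 := by
    rw [Set.uIoc_of_le zero_le_one] at hs
    exact hs.1.ne'
  simp only [dslope_of_ne _ hs', slope, h0, vsub_eq_sub, sub_zero, Complex.real_smul]
  push_cast
  field_simp

lemma aux_geom_integral (n : ℕ) :
    ∫ s in (0:ℝ)..1, ∑ j ∈ Finset.range n, (1 - (s : ℂ)) ^ j
      = ∑ j ∈ Finset.Icc 1 n, 1 / (j : ℂ) := by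
  rw [intervalIntegral.integral_finsetSum]
  · rw [Finset.sum_bij' (fun j _ => j + 1) (fun j _ => j - 1)]
    · intro a ha; simp at ha ⊢; omega
    · intro a ha; simp at ha ⊢; omega
    · intro a ha; simp
    · intro a ha; simp at ha ⊢; omega
    · intro j _
      have h1 : ∫ s in (0:ℝ)..1, (1 - s) ^ j = 1 / ((j : ℝ) + 1) := by
        rw [intervalIntegral.integral_comp_sub_left (fun s => s ^ j) 1]
        simp
      have h2 : ∫ s in (0:ℝ)..1, (1 - (s : ℂ)) ^ j
          = ∫ s in (0:ℝ)..1, (((1 - s) ^ j : ℝ) : ℂ) := by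
        congr 1; ext s; push_cast; rfl
      rw [h2, intervalIntegral.integral_ofReal, h1]
      push_cast; rfl
  · intro j _
    exact Continuous.intervalIntegrable (by fun_prop) _ _

lemma aux_summable (w : ℂ) :
    Summable (fun k : ℕ => ‖w‖ ^ (2 * k) / (Nat.factorial (2 * k) : ℝ) * (2 * k : ℕ)) := by
  have h : Summable (fun n : ℕ => (2 * ‖w‖) ^ n / (Nat.factorial n : ℝ)) :=
    Real.summable_pow_div_factorial _
  have h2 := h.comp_injective (i := fun k : ℕ => 2 * k) (fun a b hab => by simpa using hab)
  refine Summable.of_nonneg_of_le (fun k => by positivity) (fun k => ?_) h2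
  simp only [Function.comp, mul_pow]
  have : ((2 * k : ℕ) : ℝ) ≤ 2 ^ (2 * k) := by exact_mod_cast (Nat.lt_two_pow_self).le
  rw [mul_comm, ← mul_div_assoc]
  gcongr

theorem stmt10 (w : ℂ) (hw : 0 < w.re) :
    ∑' k : ℕ, ((-(eulerGamma : ℂ) + ∑ j ∈ Finset.Icc 1 (2 * k), 1 / (j : ℂ))
        / (Nat.factorial (2 * k) : ℂ)) * w ^ (2 * k) =
      Complex.sinh w * Shi w - Complex.cosh w * Chi w + Complex.log w * Complex.cosh w := by
  have key : HasSum (fun k : ℕ => ∫ s in (0:ℝ)..1, w ^ (2 * k) / (Nat.factorial (2 * k) : ℂ) *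
      ∑ j ∈ Finset.range (2 * k), (1 - (s : ℂ)) ^ j)
      (∫ s in (0:ℝ)..1, (Complex.cosh w - Complex.cosh ((1 - (s : ℂ)) * w)) / (s : ℂ)) := by
    refine intervalIntegral.hasSum_integral_of_dominated_convergence
      (fun k _ => ‖w‖ ^ (2 * k) / (Nat.factorial (2 * k) : ℝ) * (2 * k : ℕ)) ?_ ?_ ?_ ?_ ?_
    · intro k
      exact Continuous.aestronglyMeasurable (by fun_prop)
    · intro k
      refine Filter.Eventually.of_forall fun s hs => ?_
      rw [Set.uIoc_of_le zero_le_one] at hs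
      rw [norm_mul, norm_div, norm_pow, Complex.norm_natCast]
      gcongr
      refine (norm_sum_le _ _).trans ?_
      calc _ ≤ ∑ j ∈ Finset.range (2 * k), (1 : ℝ) := by
            refine Finset.sum_le_sum fun j _ => ?_
            rw [norm_pow]
            refine pow_le_one₀ (norm_nonneg _) ?_
            have : (1 - (s : ℂ)) = ((1 - s : ℝ) : ℂ) := by push_cast; rfl
            rw [this, Complex.norm_real, Real.norm_eq_abs, abs_le]
            constructor <;> linarith [hs.1, hs.2]
        _ = _ := by simp
    · exact Filter.Eventually.of_forall fun s _ => aux_summable w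
    · exact intervalIntegrable_const
    · refine Filter.Eventually.of_forall fun s hs => ?_
      rw [Set.uIoc_of_le zero_le_one] at hs
      have hs0 : (s : ℂ) ≠ 0 := by exact_mod_cast hs.1.ne'
      have h := ((Complex.hasSum_cosh w).sub
        (Complex.hasSum_cosh ((1 - (s : ℂ)) * w))).div_const (s : ℂ)
      refine h.congr_fun ?_
      intro k
      have hg := geom_sum_mul_neg (1 - (s : ℂ)) (2 * k)
      rw [sub_sub_cancel] at hg
      rw [mul_pow, eq_div_iff hs0, mul_assoc, hg]
      ring
  have hint : ∫ s in (0:ℝ)..1, (Complex.cosh w - Complex.cosh ((1 - (s : ℂ)) * w)) / (s : ℂ)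
      = Complex.sinh w * Shi w - Complex.cosh w *
        ∫ s in (0:ℝ)..1, (Complex.cosh ((s : ℂ) * w) - 1) / (s : ℂ) := by
    have hd : Differentiable ℝ (fun s : ℝ => (s : ℂ) * w) := by
      intro s
      exact (Complex.ofRealCLM.differentiableAt).mul_const w
    have i1 := aux_integrable (fun s => Complex.sinh ((s : ℂ) * w))
      (fun s => ((Complex.differentiable_sinh _).restrictScalars ℝ).comp s (hd s)) (by simp)
    have i2 := aux_integrable (fun s => Complex.cosh ((s : ℂ) * w) - 1)
      (fun s => (((Complex.differentiable_cosh _).restrictScalars ℝ).comp s (hd s)).sub_const 1)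
      (by simp)
    rw [Shi, ← intervalIntegral.integral_const_mul, ← intervalIntegral.integral_const_mul,
      ← intervalIntegral.integral_sub (i1.const_mul _) (i2.const_mul _)]
    congr 1
    ext s
    rw [sub_mul, one_mul, Complex.cosh_sub]
    ring
  have h2 := key.add ((Complex.hasSum_cosh w).mul_left (-(eulerGamma : ℂ)))
  rw [hint] at h2
  have h3 : Complex.sinh w * Shi w - Complex.cosh w * Chi w + Complex.log w * Complex.cosh w
    = Complex.sinh w * Shi w - Complex.cosh w *
        (∫ s in (0:ℝ)..1, (Complex.cosh ((s : ℂ) * w) - 1) / (s : ℂ))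
        + -(eulerGamma : ℂ) * Complex.cosh w := by
    rw [Chi]
    ring
  rw [h3, ← h2.tsum_eq]
  refine tsum_congr fun k => ?_
  rw [intervalIntegral.integral_const_mul, aux_geom_integral]
  ring
end

section
/- Let z ∈ ℂ with Re(z) > 0. Then ψ₁(z) = (1/2) log²(z) − ∫_0^∞ e^{−zt} ( 1/t − 1/(1 − e^{−t}) ) ( γ + log(t) ) dt. -/
open Filter Topology MeasureTheory

noncomputable def psi1 (z : ℂ) : ℂ :=
  -(gamma1 : ℂ) - Complex.log z / z -
    ∑' n : ℕ, (Complex.log (((n : ℂ) + 1) + z) / (((n : ℂ) + 1) + z)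
      - Complex.log ((n : ℂ) + 1) / ((n : ℂ) + 1))


/-- the basic kernel `e^{-at} (γ + log t)` -/
noncomputable def kerL (a : ℂ) (t : ℝ) : ℂ :=
  Complex.exp (-a * (t : ℂ)) * ((eulerGamma : ℂ) + (Real.log t : ℂ))

lemma kerL_measurable (a : ℂ) : Measurable (kerL a) := by
  unfold kerL
  exact (by fun_prop : Measurable fun t : ℝ => Complex.exp (-a * (t : ℂ))).mul
    (measurable_const.add (Complex.measurable_ofReal.comp Real.measurable_log))

lemma kerL_norm (a : ℂ) (t : ℝ) :
    ‖kerL a t‖ = Real.exp (-a.re * t) * |eulerGamma + Real.log t| := by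
  unfold kerL
  rw [norm_mul, Complex.norm_exp, ← Complex.ofReal_add, Complex.norm_real, Real.norm_eq_abs]
  simp

lemma mellin_facts (r : ℝ) (hr : 0 < r) :
    MellinConvergent (fun t => Real.log t • Complex.exp (-(r * t))) 1 ∧
      HasDerivAt (mellin (fun t : ℝ => Complex.exp (-(r * t))))
        (mellin (fun t => Real.log t • Complex.exp (-(r * t))) 1) 1 := by
  apply mellin_hasDerivAt_of_isBigO_rpow (a := 2) (b := 0)
  · exact (by fun_prop : Continuous fun t : ℝ => Complex.exp (-(r * t))).locallyIntegrable.locallyIntegrableOn _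
  · have := (isLittleO_exp_neg_mul_rpow_atTop hr (-2)).isBigO
    refine Asymptotics.IsBigO.trans (Asymptotics.isBigO_of_le _ fun t => ?_) this
    rw [Complex.norm_exp]; simp
  · norm_num
  · simp only [neg_zero, Real.rpow_zero]
    refine Filter.Tendsto.isBigO_one (c := 1) ℝ ?_
    have : Continuous fun t : ℝ => Complex.exp (-(r * t)) := by fun_prop
    have h := this.tendsto 0
    simp at h
    exact h.mono_left nhdsWithin_le_nhds
  · norm_num

lemma exp_int (a : ℂ) (ha : 0 < a.re) :
    IntegrableOn (fun t : ℝ => Complex.exp (-a * (t : ℂ))) (Set.Ioi 0) :=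
  integrableOn_exp_mul_complex_Ioi (by simpa) 0

lemma kerL_int_real (r : ℝ) (hr : 0 < r) : IntegrableOn (kerL r) (Set.Ioi 0) ∧
    ∫ t in Set.Ioi (0:ℝ), kerL r t = - Complex.log r / r := by
  obtain ⟨h1, h2⟩ := mellin_facts r hr
  have h3 : IntegrableOn (fun t : ℝ => Complex.exp (-(r:ℂ) * (t : ℂ)) * (Real.log t : ℂ))
      (Set.Ioi 0) := by
    unfold MellinConvergent at h1
    refine h1.congr_fun (fun t ht => ?_) measurableSet_Ioi
    simp [mul_comm]
  have h4 := exp_int r (by simpa)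
  have h5 : mellin (fun t => Real.log t • Complex.exp (-(r * t))) 1 =
      ∫ t in Set.Ioi (0:ℝ), Complex.exp (-(r:ℂ) * (t : ℂ)) * (Real.log t : ℂ) := by
    unfold mellin
    refine setIntegral_congr_fun measurableSet_Ioi (fun t ht => ?_)
    simp [mul_comm]
  have hr0 : (r:ℂ) ≠ 0 := by exact_mod_cast hr.ne'
  have h6 : HasDerivAt (fun s : ℂ => (1 / (r:ℂ)) ^ s * Complex.Gamma s)
      ((1 / (r:ℂ)) ^ (1:ℂ) * Complex.log (1 / r) * 1 * Complex.Gamma 1 +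
        (1 / (r:ℂ)) ^ (1:ℂ) * (-(Real.eulerMascheroniConstant : ℂ))) 1 := by
    have := (hasDerivAt_id (1:ℂ)).const_cpow (c := 1 / (r:ℂ)) (Or.inl (by simpa using hr0))
    exact this.mul Complex.hasDerivAt_Gamma_one
  have h7 : (mellin (fun t : ℝ => Complex.exp (-(r * t)))) =ᶠ[𝓝 1]
      (fun s : ℂ => (1 / (r:ℂ)) ^ s * Complex.Gamma s) := by
    have : ∀ᶠ s : ℂ in 𝓝 1, 0 < s.re :=
      Complex.continuous_re.continuousAt.eventually (lt_mem_nhds (by simp))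
    filter_upwards [this] with s hs
    rw [← Complex.integral_cpow_mul_exp_neg_mul_Ioi hs hr]
    simp [mellin]
  have h8 := (h6.congr_of_eventuallyEq h7).unique h2
  have hk : kerL r = fun t : ℝ => (eulerGamma : ℂ) * Complex.exp (-(r:ℂ) * (t : ℂ)) +
      Complex.exp (-(r:ℂ) * (t : ℂ)) * (Real.log t : ℂ) := by
    ext t; unfold kerL; ring
  rw [hk]
  refine ⟨(h4.const_mul _).add h3, ?_⟩
  rw [integral_add (h4.const_mul _) h3, ← h5, ← h8, integral_const_mul,
    integral_exp_mul_complex_Ioi (by simpa)]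
  have hl : Complex.log (1 / r) = - Complex.log r := by
    rw [one_div, Complex.log_inv]
    rw [Complex.arg_ofReal_of_nonneg hr.le]; exact Real.pi_pos.ne
  rw [hl]
  simp [eulerGamma]
  field_simp
  ring

lemma kerL_int (a : ℂ) (ha : 0 < a.re) : IntegrableOn (kerL a) (Set.Ioi 0) := by
  refine Integrable.mono (kerL_int_real a.re ha).1 (kerL_measurable a).aestronglyMeasurable ?_
  refine Eventually.of_forall fun t => ?_
  rw [kerL_norm, kerL_norm]; simp

lemma kerL_mul_int (a : ℂ) (ha : 0 < a.re) :
    IntegrableOn (fun t : ℝ => (t:ℂ) * kerL a t) (Set.Ioi 0) := by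
  have h := ((kerL_int (a / 2) (by simpa)).const_mul ((2 / a.re : ℝ) : ℂ))
  refine Integrable.mono h
    (Complex.measurable_ofReal.mul (kerL_measurable a)).aestronglyMeasurable ?_
  refine (ae_restrict_iff' measurableSet_Ioi).2 (Eventually.of_forall fun t ht => ?_)
  have ht : 0 < t := ht
  rw [norm_mul, norm_mul, kerL_norm, kerL_norm, Complex.norm_real, Complex.norm_real,
    Real.norm_eq_abs, Real.norm_eq_abs, abs_of_pos ht, abs_of_pos (div_pos two_pos ha), ← mul_assoc,
    ← mul_assoc]
  refine mul_le_mul_of_nonneg_right ?_ (abs_nonneg _)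
  have e : -a.re * t = -(a / 2).re * t + (-(a.re / 2 * t)) := by simp; ring
  rw [e, Real.exp_add]
  have h1 : a.re / 2 * t * Real.exp (-(a.re / 2 * t)) ≤ 1 := by
    rw [Real.exp_neg]
    have := Real.add_one_le_exp (a.re / 2 * t)
    rw [← div_eq_mul_inv, div_le_one (Real.exp_pos _)]; linarith
  have h2 : t * Real.exp (-(a.re / 2 * t)) ≤ 2 / a.re := by
    rw [le_div_iff₀ ha]; linarith
  nlinarith [Real.exp_pos (-(a / 2).re * t)]

lemma kerL_diff : DifferentiableOn ℂ (fun a => ∫ t in Set.Ioi (0:ℝ), kerL a t)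
    {a : ℂ | 0 < a.re} := by
  intro a ha
  have ha : 0 < a.re := ha
  have hnhds : {b : ℂ | a.re / 2 < b.re} ∈ 𝓝 a :=
    (isOpen_lt continuous_const Complex.continuous_re).mem_nhds (by simp; linarith)
  have := hasDerivAt_integral_of_dominated_loc_of_deriv_le
    (μ := volume.restrict (Set.Ioi (0:ℝ))) (F := kerL) (x₀ := a)
    (F' := fun b t => -((t:ℂ) * kerL b t))
    (bound := fun t => ‖(t:ℂ) * kerL (a.re / 2 : ℝ) t‖) hnhds
    (Eventually.of_forall fun b => (kerL_measurable b).aestronglyMeasurable) (kerL_int a ha)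
    (Complex.measurable_ofReal.mul (kerL_measurable a)).neg.aestronglyMeasurable
    ?_ (kerL_mul_int _ (by simpa)).norm ?_
  · exact this.2.differentiableAt.differentiableWithinAt
  · refine (ae_restrict_iff' measurableSet_Ioi).2 (Eventually.of_forall fun t ht b hb => ?_)
    have ht : 0 < t := ht
    have hb : a.re / 2 < b.re := hb
    rw [norm_neg, norm_mul, norm_mul, kerL_norm, kerL_norm, Complex.ofReal_re]
    gcongr
  · refine Eventually.of_forall fun t b hb => ?_
    have h : HasDerivAt (fun b : ℂ => -b * (t:ℂ)) (-1 * (t:ℂ)) b :=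
      ((hasDerivAt_id b).neg).mul_const _
    have := h.cexp.mul_const ((eulerGamma : ℂ) + (Real.log t : ℂ))
    refine HasDerivAt.congr_deriv this ?_
    unfold kerL; ring

lemma ne_zero_of_re {a : ℂ} (ha : 0 < a.re) : a ≠ 0 := by
  rintro rfl; simp at ha

lemma kerL_integral (a : ℂ) (ha : 0 < a.re) :
    ∫ t in Set.Ioi (0:ℝ), kerL a t = - Complex.log a / a := by
  have hopen : IsOpen {a : ℂ | 0 < a.re} := isOpen_lt continuous_const Complex.continuous_re
  have h1 : AnalyticOnNhd ℂ (fun a => ∫ t in Set.Ioi (0:ℝ), kerL a t) {a : ℂ | 0 < a.re} :=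
    kerL_diff.analyticOnNhd hopen
  have h2 : AnalyticOnNhd ℂ (fun a => - Complex.log a / a) {a : ℂ | 0 < a.re} := by
    refine DifferentiableOn.analyticOnNhd (fun b hb => ?_) hopen
    have hb : 0 < b.re := hb
    exact ((Complex.differentiableAt_log (Or.inl hb)).neg.div differentiableAt_id
      (ne_zero_of_re hb)).differentiableWithinAt
  have h3 : IsPreconnected {a : ℂ | 0 < a.re} :=
    (convex_halfSpace_re_gt 0).isPreconnected
  refine h1.eqOn_of_preconnected_of_frequently_eq h2 h3 (z₀ := 1) (by simp) ?_ ha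
  have ht : Tendsto (fun n : ℕ => (((1 + 1 / ((n:ℝ) + 1) : ℝ)) : ℂ)) atTop (𝓝[≠] 1) := by
    refine tendsto_nhdsWithin_iff.2 ⟨?_, Eventually.of_forall fun n => ?_⟩
    · have : Tendsto (fun n : ℕ => 1 + 1 / ((n:ℝ) + 1)) atTop (𝓝 (1 + 0)) :=
        tendsto_const_nhds.add tendsto_one_div_add_atTop_nhds_zero_nat
      have h := (Complex.continuous_ofReal.tendsto _).comp this
      simpa [Function.comp_def] using h
    · simp only [Set.mem_compl_iff, Set.mem_singleton_iff]
      rw [Complex.ofReal_eq_one]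
      have : 0 < 1 / ((n:ℝ) + 1) := by positivity
      linarith
  refine ht.frequently (Eventually.of_forall fun n => ?_).frequently
  exact (kerL_int_real _ (by positivity)).2

/-- The Frullani type integral. -/
lemma kerL_frullani (z : ℂ) (hz : 0 < z.re) (M : ℕ) :
    IntegrableOn (fun t : ℝ => (kerL z t - kerL (z + M) t) / t) (Set.Ioi 0) ∧
    ∫ t in Set.Ioi (0:ℝ), (kerL z t - kerL (z + M) t) / t =
      (1/2) * Complex.log z ^ 2 - (1/2) * Complex.log (z + M) ^ 2 := by
  have hM : (0:ℝ) ≤ M := Nat.cast_nonneg M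
  have hprod : Integrable (Function.uncurry fun (t x : ℝ) => kerL (z + x) t)
      ((volume.restrict (Set.Ioi (0:ℝ))).prod (volume.restrict (Set.Ioc (0:ℝ) M))) := by
    have hb := (kerL_int z hz).norm.comp_fst (volume.restrict (Set.Ioc (0:ℝ) M))
    refine Integrable.mono hb ?_ ?_
    · refine Measurable.aestronglyMeasurable ?_
      unfold Function.uncurry kerL
      exact (by fun_prop : Measurable fun p : ℝ × ℝ =>
        Complex.exp (-(z + (p.2:ℂ)) * (p.1 : ℂ))).mul (measurable_const.add
          (Complex.measurable_ofReal.comp (Real.measurable_log.comp measurable_fst)))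
    · rw [Measure.prod_restrict]
      refine (ae_restrict_iff' (measurableSet_Ioi.prod measurableSet_Ioc)).2
        (Eventually.of_forall fun p hp => ?_)
      have h1 : 0 < p.1 := hp.1
      have h2 : 0 < p.2 := hp.2.1
      rw [norm_norm, Function.uncurry, kerL_norm, kerL_norm]
      refine mul_le_mul_of_nonneg_right (Real.exp_le_exp.2 ?_) (abs_nonneg _)
      simp; nlinarith
  have inner : ∀ t ∈ Set.Ioi (0:ℝ), ∫ x in Set.Ioc (0:ℝ) M, kerL (z + x) t =
      (kerL z t - kerL (z + M) t) / t := by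
    intro t ht
    have ht0 : (t:ℂ) ≠ 0 := by exact_mod_cast (ne_of_gt ht)
    rw [← intervalIntegral.integral_of_le hM]
    have hd : ∀ x ∈ Set.uIcc (0:ℝ) M,
        HasDerivAt (fun x : ℝ => -kerL (z + x) t / t) (kerL (z + x) t) x := by
      intro x _
      have h : HasDerivAt (fun x : ℝ => -(z + (x:ℂ)) * (t:ℂ)) (-1 * (t:ℂ)) x :=
        (((hasDerivAt_id x).ofReal_comp.const_add z).neg).mul_const _
      have := ((h.cexp.mul_const ((eulerGamma : ℂ) + (Real.log t : ℂ))).neg).div_const (t:ℂ)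
      refine HasDerivAt.congr_deriv this ?_
      unfold kerL; field_simp
    rw [intervalIntegral.integral_eq_sub_of_hasDerivAt hd]
    · simp; ring
    · refine Continuous.intervalIntegrable ?_ _ _
      unfold kerL; fun_prop
  have outer : ∫ x in Set.Ioc (0:ℝ) M, ∫ t in Set.Ioi (0:ℝ), kerL (z + x) t =
      (1/2) * Complex.log z ^ 2 - (1/2) * Complex.log (z + M) ^ 2 := by
    have hre : ∀ x : ℝ, 0 ≤ x → 0 < (z + x).re := fun x hx => by simp; linarith
    have e : ∫ x in Set.Ioc (0:ℝ) M, ∫ t in Set.Ioi (0:ℝ), kerL (z + x) t =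
        ∫ x in Set.Ioc (0:ℝ) M, - Complex.log (z + x) / (z + x) :=
      setIntegral_congr_fun measurableSet_Ioc fun x hx => kerL_integral _ (hre x hx.1.le)
    rw [e, ← intervalIntegral.integral_of_le hM]
    have hd : ∀ x ∈ Set.uIcc (0:ℝ) M,
        HasDerivAt (fun x : ℝ => -(1/2) * Complex.log (z + x) ^ 2)
          (- Complex.log (z + x) / (z + x)) x := by
      intro x hx
      rw [Set.uIcc_of_le hM] at hx
      have h : HasDerivAt (fun x : ℝ => z + (x:ℂ)) 1 x := by
        simpa using (hasDerivAt_id x).ofReal_comp.const_add z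
      have := ((h.clog_real (Or.inl (hre x hx.1))).pow 2).const_mul (-(1/2) : ℂ)
      refine HasDerivAt.congr_deriv this ?_
      push_cast; ring
    rw [intervalIntegral.integral_eq_sub_of_hasDerivAt hd]
    · simp; ring
    · refine ContinuousOn.intervalIntegrable fun x hx => ?_
      rw [Set.uIcc_of_le hM] at hx
      have h := hre x hx.1
      have hc : ContinuousAt (fun x : ℝ => z + (x:ℂ)) x := by fun_prop
      exact ((hc.clog (Or.inl h)).neg.div hc (ne_zero_of_re h)).continuousWithinAt
  constructor
  · have := hprod.integral_prod_left
    exact IntegrableOn.congr_fun this inner measurableSet_Ioi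
  · rw [← outer, ← setIntegral_congr_fun measurableSet_Ioi inner]
    exact integral_integral_swap hprod

lemma kernel_bound (t : ℝ) (ht : 0 < t) :
    ‖(1 / (t : ℂ) - 1 / (1 - Complex.exp (-(t : ℂ))))‖ ≤ 1 := by
  have e : (1 / (t : ℂ) - 1 / (1 - Complex.exp (-(t : ℂ)))) =
      ((1 / t - 1 / (1 - Real.exp (-t)) : ℝ) : ℂ) := by push_cast; rfl
  rw [e, Complex.norm_real, Real.norm_eq_abs]
  have h1 : 0 < 1 - Real.exp (-t) := by
    have : Real.exp (-t) < 1 := by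
      rw [← Real.exp_zero]; exact Real.exp_lt_exp.2 (by linarith)
    linarith
  have h2 : 1 - Real.exp (-t) ≤ t := by
    have := Real.add_one_le_exp (-t); linarith
  have h3 : t ≤ (1 + t) * (1 - Real.exp (-t)) := by
    have h4 := Real.add_one_le_exp t
    have h5 : Real.exp t * Real.exp (-t) = 1 := by rw [← Real.exp_add]; simp
    nlinarith [Real.exp_pos (-t)]
  rw [abs_le]
  have h6 : 1 / t ≤ 1 / (1 - Real.exp (-t)) := one_div_le_one_div_of_le h1 h2
  have h7 : 1 / (1 - Real.exp (-t)) ≤ 1 / t + 1 := by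
    rw [div_le_iff₀ h1]
    have : (1 / t + 1) * (1 - Real.exp (-t)) = ((1 + t) * (1 - Real.exp (-t))) / t := by
      field_simp
    rw [this, le_div_iff₀ ht]; linarith
  constructor <;> linarith

noncomputable def mainInt (z : ℂ) : ℂ :=
  ∫ t in Set.Ioi (0:ℝ), Complex.exp (-z * (t : ℂ))
          * (1 / (t : ℂ) - 1 / (1 - Complex.exp (-(t : ℂ))))
          * ((eulerGamma : ℂ) + (Real.log t : ℂ))

lemma partial_identity (z : ℂ) (hz : 0 < z.re) (M : ℕ) :
    ∫ t in Set.Ioi (0:ℝ), (1 / (t : ℂ) - 1 / (1 - Complex.exp (-(t : ℂ)))) *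
      (1 - Complex.exp (-(M * t : ℝ))) * kerL z t =
    (1/2) * Complex.log z ^ 2 - (1/2) * Complex.log (z + M) ^ 2 +
      ∑ n ∈ Finset.range M, Complex.log (z + n) / (z + n) := by
  have hre : ∀ n : ℕ, 0 < (z + n).re := fun n => by
    simp; have : (0:ℝ) ≤ n := Nat.cast_nonneg n
    linarith
  obtain ⟨hi, hv⟩ := kerL_frullani z hz M
  have hs : ∑ n ∈ Finset.range M, Complex.log (z + n) / (z + n) =
      - ∫ t in Set.Ioi (0:ℝ), ∑ n ∈ Finset.range M, kerL (z + n) t := by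
    rw [integral_finsetSum _ fun n _ => kerL_int _ (hre n), ← Finset.sum_neg_distrib]
    refine Finset.sum_congr rfl fun n _ => ?_
    rw [kerL_integral _ (hre n)]; ring
  rw [hs, ← hv, ← sub_eq_add_neg,
    ← integral_sub hi (integrable_finsetSum _ fun n _ => kerL_int _ (hre n))]
  refine setIntegral_congr_fun measurableSet_Ioi fun t ht => ?_
  have ht : 0 < t := ht
  have hadd : ∀ n : ℕ, kerL (z + n) t = Complex.exp (-(t:ℂ)) ^ n * kerL z t := by
    intro n
    unfold kerL
    rw [← Complex.exp_nat_mul, ← mul_assoc, ← Complex.exp_add]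
    congr 2; ring
  have hq : Complex.exp (-(t:ℂ)) ≠ 1 := by
    have : Real.exp (-t) < 1 := by
      rw [← Real.exp_zero]; exact Real.exp_lt_exp.2 (by linarith)
    intro h
    have : Real.exp (-t) = 1 := by exact_mod_cast h
    linarith
  have hM2 : Complex.exp (-(M * t : ℝ)) = Complex.exp (-(t:ℂ)) ^ M := by
    rw [← Complex.exp_nat_mul]; congr 1; push_cast; ring
  simp only [hadd]
  rw [← Finset.sum_mul, geom_sum_eq hq, hM2]
  set q := Complex.exp (-(t:ℂ))
  have ht0 : (t:ℂ) ≠ 0 := by exact_mod_cast ht.ne'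
  have h1 : 1 - q ≠ 0 := sub_ne_zero.2 (Ne.symm hq)
  have h2 : q - 1 ≠ 0 := sub_ne_zero.2 hq
  have h3 : (q ^ M - 1) / (q - 1) = (1 - q ^ M) / (1 - q) := by
    rw [div_eq_div_iff h2 h1]; ring
  rw [h3]
  field_simp

lemma partial_limit (z : ℂ) (hz : 0 < z.re) :
    Tendsto (fun M : ℕ => (1/2) * Complex.log z ^ 2 - (1/2) * Complex.log (z + M) ^ 2 +
      ∑ n ∈ Finset.range M, Complex.log (z + n) / (z + n)) atTop (𝓝 (mainInt z)) := by
  simp_rw [← partial_identity z hz]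
  have : mainInt z = ∫ t in Set.Ioi (0:ℝ),
      (1 / (t : ℂ) - 1 / (1 - Complex.exp (-(t : ℂ)))) * (1 - 0) * kerL z t := by
    unfold mainInt kerL; congr 1; ext t; ring
  rw [this]
  refine tendsto_integral_of_dominated_convergence (fun t => ‖kerL z t‖) (fun M => ?_)
    (kerL_int z hz).norm (fun M => ?_) ?_
  · refine Measurable.aestronglyMeasurable (Measurable.mul ?_ (kerL_measurable z))
    fun_prop
  · refine (ae_restrict_iff' measurableSet_Ioi).2 (Eventually.of_forall fun t ht => ?_)
    have ht : 0 < t := ht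
    rw [norm_mul, norm_mul]
    have h1 := kernel_bound t ht
    have h2 : ‖(1 - Complex.exp (-(M * t : ℝ)))‖ ≤ 1 := by
      have e : (1 - Complex.exp (-(M * t : ℝ))) = ((1 - Real.exp (-(M * t)) : ℝ) : ℂ) := by
        push_cast; rfl
      rw [e, Complex.norm_real, Real.norm_eq_abs, abs_le]
      have : Real.exp (-(M * t)) ≤ 1 := Real.exp_le_one_iff.2 (by
        have : 0 ≤ (M:ℝ) * t := by positivity
        linarith)
      constructor <;> linarith [Real.exp_pos (-(M * t))]
    have h3 := mul_le_mul h1 h2 (norm_nonneg _) zero_le_one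
    calc _ ≤ (1 * 1) * ‖kerL z t‖ := by gcongr
      _ = _ := by ring
  · refine (ae_restrict_iff' measurableSet_Ioi).2 (Eventually.of_forall fun t ht => ?_)
    have ht : 0 < t := ht
    refine (tendsto_const_nhds.mul (tendsto_const_nhds.sub ?_)).mul tendsto_const_nhds
    have h : Tendsto (fun M : ℕ => Real.exp (-(M * t))) atTop (𝓝 0) :=
      Real.tendsto_exp_neg_atTop_nhds_zero.comp
        (tendsto_natCast_atTop_atTop.atTop_mul_const ht)
    have h' := (Complex.continuous_ofReal.tendsto _).comp h
    simpa [Function.comp_def] using h'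

lemma norm_log_bound (w : ℂ) (hw : 1 ≤ ‖w‖) : ‖Complex.log w‖ ≤ 6 * ‖w‖ ^ (1/2 : ℝ) := by
  have h1 : ‖Complex.log w‖ ≤ |Real.log ‖w‖| + |Complex.arg w| := by
    have := Complex.norm_le_abs_re_add_abs_im (Complex.log w)
    rwa [Complex.log_re, Complex.log_im] at this
  have h2 := Complex.abs_arg_le_pi w
  have h3 : Real.log ‖w‖ ≤ ‖w‖ ^ (1/2 : ℝ) / (1/2) :=
    Real.log_le_rpow_div (norm_nonneg _) (by norm_num)
  rw [abs_of_nonneg (Real.log_nonneg hw)] at h1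
  have h4 : 1 ≤ ‖w‖ ^ (1/2 : ℝ) := Real.one_le_rpow hw (by norm_num)
  have := Real.pi_lt_four
  linarith

lemma logdiv_diff (N : ℝ) (hN : 1 ≤ N) (z : ℂ) (hz : 0 ≤ z.re) :
    ‖Complex.log (N + z) / (N + z) - Complex.log N / N‖ ≤ 7 * (1 / N ^ (3/2 : ℝ)) * ‖z‖ := by
  have := Convex.norm_image_sub_le_of_norm_hasDerivWithin_le
    (f := fun w => Complex.log w / w) (f' := fun w => (w⁻¹ * w - Complex.log w * 1) / w ^ 2)
    (s := {w : ℂ | N ≤ w.re}) (C := 7 * (1 / N ^ (3/2 : ℝ))) (x := (N:ℂ)) (y := N + z)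
    ?_ ?_ (convex_halfSpace_re_ge N) (by simp) (by simpa)
  · simpa using this
  · intro w hw
    have hw : 0 < w.re := lt_of_lt_of_le (by linarith) hw
    exact ((Complex.hasDerivAt_log (Or.inl hw)).div (hasDerivAt_id w)
      (ne_zero_of_re hw)).hasDerivWithinAt
  · intro w hw
    have hw : N ≤ w.re := hw
    have hw' : N ≤ ‖w‖ := hw.trans (Complex.re_le_norm w)
    have hw0 : w ≠ 0 := ne_zero_of_re (by linarith)
    have h1 := norm_log_bound w (by linarith)
    have h4 : 1 ≤ ‖w‖ ^ (1/2 : ℝ) := Real.one_le_rpow (by linarith) (by norm_num)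
    rw [inv_mul_cancel₀ hw0, mul_one, norm_div, norm_pow]
    have h5 : ‖1 - Complex.log w‖ ≤ 7 * ‖w‖ ^ (1/2:ℝ) := by
      refine (norm_sub_le _ _).trans ?_
      simp only [norm_one]; linarith
    have hp : 0 < ‖w‖ := by linarith
    have h6 : ‖w‖ ^ 2 = ‖w‖ ^ (1/2:ℝ) * ‖w‖ ^ (3/2:ℝ) := by
      rw [← Real.rpow_add hp]; norm_num
    have h7 : N ^ (3/2:ℝ) ≤ ‖w‖ ^ (3/2:ℝ) := Real.rpow_le_rpow (by linarith) hw' (by norm_num)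
    calc _ ≤ 7 * ‖w‖ ^ (1/2:ℝ) / ‖w‖ ^ 2 := by gcongr
      _ = 7 * (1 / ‖w‖ ^ (3/2:ℝ)) := by rw [h6]; field_simp
      _ ≤ _ := by
        have : 0 < N ^ (3/2:ℝ) := Real.rpow_pos_of_pos (by linarith) _
        gcongr

lemma logsq_diff (N : ℝ) (hN : 1 ≤ N) (z : ℂ) (hz : 0 ≤ z.re) :
    ‖Complex.log (N + z) ^ 2 - Complex.log N ^ 2‖ ≤ 12 * (1 / N ^ (1/2 : ℝ)) * ‖z‖ := by
  have := Convex.norm_image_sub_le_of_norm_hasDerivWithin_le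
    (f := fun w => Complex.log w ^ 2)
    (f' := fun w => 2 * Complex.log w * w⁻¹)
    (s := {w : ℂ | N ≤ w.re}) (C := 12 * (1 / N ^ (1/2 : ℝ))) (x := (N:ℂ)) (y := N + z)
    ?_ ?_ (convex_halfSpace_re_ge N) (by simp) (by simpa)
  · simpa using this
  · intro w hw
    have hw : 0 < w.re := lt_of_lt_of_le (by linarith) hw
    have := ((Complex.hasDerivAt_log (Or.inl hw)).pow 2).hasDerivWithinAt (s := {w : ℂ | N ≤ w.re})
    refine HasDerivWithinAt.congr_deriv this ?_
    push_cast; ring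
  · intro w hw
    have hw : N ≤ w.re := hw
    have hw' : N ≤ ‖w‖ := hw.trans (Complex.re_le_norm w)
    have h1 := norm_log_bound w (by linarith)
    have hp : 0 < ‖w‖ := by linarith
    rw [norm_mul, norm_mul, norm_inv]
    have h6 : ‖w‖ = ‖w‖ ^ (1/2:ℝ) * ‖w‖ ^ (1/2:ℝ) := by
      rw [← Real.rpow_add hp]; norm_num
    have h7 : N ^ (1/2:ℝ) ≤ ‖w‖ ^ (1/2:ℝ) := Real.rpow_le_rpow (by linarith) hw' (by norm_num)
    have hq : 0 < ‖w‖ ^ (1/2:ℝ) := Real.rpow_pos_of_pos hp _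
    calc _ ≤ ‖(2:ℂ)‖ * (6 * ‖w‖ ^ (1/2:ℝ)) * ‖w‖⁻¹ := by gcongr
      _ = 12 * (1 / ‖w‖ ^ (1/2:ℝ)) := by
        have : ‖w‖ ^ (1/2:ℝ) * ‖w‖⁻¹ = 1 / ‖w‖ ^ (1/2:ℝ) := by
          rw [eq_div_iff hq.ne', mul_right_comm, ← h6, mul_inv_cancel₀ hp.ne']
        rw [mul_assoc, mul_assoc, this]; simp; ring
      _ ≤ _ := by
        have : 0 < N ^ (1/2:ℝ) := Real.rpow_pos_of_pos (by linarith) _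
        gcongr

lemma logsq_limit (z : ℂ) (hz : 0 ≤ z.re) :
    Tendsto (fun M : ℕ => Complex.log ((M:ℂ) + z) ^ 2 - Complex.log M ^ 2) atTop (𝓝 0) := by
  refine squeeze_zero_norm' (a := fun M : ℕ => 12 * (1 / (M:ℝ) ^ (1/2 : ℝ)) * ‖z‖) ?_ ?_
  · filter_upwards [eventually_ge_atTop 1] with M hM
    simpa only [Complex.ofReal_natCast] using logsq_diff (M:ℝ) (by exact_mod_cast hM) z hz
  · have h : Tendsto (fun M : ℕ => 1 / (M:ℝ) ^ (1/2 : ℝ)) atTop (𝓝 0) := by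
      have := (tendsto_rpow_neg_atTop (y := 1/2) (by norm_num)).comp tendsto_natCast_atTop_atTop
      refine this.congr fun M => ?_
      simp [Real.rpow_neg (Nat.cast_nonneg M)]
    simpa using (h.const_mul 12).mul_const ‖z‖

lemma psi_summable (z : ℂ) (hz : 0 < z.re) :
    Summable fun n : ℕ => (Complex.log (((n : ℂ) + 1) + z) / (((n : ℂ) + 1) + z)
      - Complex.log ((n : ℂ) + 1) / ((n : ℂ) + 1)) := by
  have h := (((Real.summable_one_div_nat_add_rpow 1 (3/2)).2 (by norm_num)).mul_left 7).mul_right ‖z‖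
  refine Summable.of_norm_bounded h fun n => ?_
  have := logdiv_diff ((n:ℝ) + 1) (by simp) z hz.le
  rw [abs_of_nonneg (by positivity)]
  simpa only [Complex.ofReal_natCast, Complex.ofReal_add, Complex.ofReal_one] using this

lemma gamma1_exists : ∃ l : ℝ, Tendsto (fun n : ℕ => ∑ j ∈ Finset.Icc 1 n, Real.log j / j -
    (Real.log n) ^ 2 / 2) atTop (𝓝 l) := by
  have h1 := partial_limit 1 (by simp)
  have h2 := (h1.add ((logsq_limit 1 (by simp)).const_mul (1/2)))
  have h3 := (Complex.continuous_re.tendsto _).comp h2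
  refine ⟨_, h3.congr fun M => ?_⟩
  have e : ∑ n ∈ Finset.range M, Complex.log (1 + n) / (1 + n) =
      ((∑ j ∈ Finset.Icc 1 M, Real.log j / j : ℝ) : ℂ) := by
    rw [Finset.range_eq_Ico, Finset.sum_Ico_add' (fun j : ℕ => Complex.log j / (j:ℂ)) 0 M 1 |>.symm.trans
      (Finset.sum_congr rfl fun n _ => by push_cast; rw [add_comm]) |>.symm]
    push_cast
    refine Finset.sum_congr ?_ fun n _ => ?_
    · ext; simp
    · rw [← Complex.natCast_log]
  simp only [Function.comp_apply, e]
  have e2 : Complex.log M = ((Real.log M : ℝ) : ℂ) := Complex.natCast_log.symm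
  rw [e2, add_comm (M:ℂ) 1]
  have : (1 / 2 * Complex.log 1 ^ 2 - 1 / 2 * Complex.log (1 + ↑M) ^ 2 +
      ((∑ j ∈ Finset.Icc 1 M, Real.log j / j : ℝ) : ℂ) +
      1 / 2 * (Complex.log (1 + ↑M) ^ 2 - ((Real.log M : ℝ) : ℂ) ^ 2)) =
      ((∑ j ∈ Finset.Icc 1 M, Real.log j / j - (Real.log M) ^ 2 / 2 : ℝ) : ℂ) := by
    push_cast; simp; ring
  rw [this, Complex.ofReal_re]

theorem stmt11 (z : ℂ) (hz : 0 < z.re) :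
    psi1 z = (1/2) * (Complex.log z) ^ 2
      - ∫ t in Set.Ioi (0:ℝ), Complex.exp (-z * (t : ℂ))
          * (1 / (t : ℂ) - 1 / (1 - Complex.exp (-(t : ℂ))))
          * ((eulerGamma : ℂ) + (Real.log t : ℂ)) := by
  change psi1 z = (1/2) * (Complex.log z) ^ 2 - mainInt z
  have hg : Tendsto (fun n : ℕ => ∑ j ∈ Finset.Icc 1 n, Real.log j / j -
    (Real.log n) ^ 2 / 2) atTop (𝓝 gamma1) := tendsto_nhds_limUnder gamma1_exists
  have hg' := (Complex.continuous_ofReal.tendsto _).comp hg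
  have hs := (psi_summable z hz).hasSum.tendsto_sum_nat
  have hA : Tendsto (fun M : ℕ => -((∑ j ∈ Finset.Icc 1 M, Real.log j / j -
    (Real.log M) ^ 2 / 2 : ℝ) : ℂ) - Complex.log z / z -
      ∑ n ∈ Finset.range M, (Complex.log (((n : ℂ) + 1) + z) / (((n : ℂ) + 1) + z)
      - Complex.log ((n : ℂ) + 1) / ((n : ℂ) + 1))) atTop (𝓝 (psi1 z)) :=
    (hg'.neg.sub_const _).sub hs
  have hB := ((partial_limit z hz).comp (tendsto_add_atTop_nat 1)).const_sub
    ((1/2) * (Complex.log z) ^ 2)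
  have hC := hB.sub ((logsq_limit (z + 1) (by simp; linarith)).const_mul (1/2))
  rw [mul_zero, sub_zero] at hC
  refine tendsto_nhds_unique hA (hC.congr fun M => ?_)
  have e1 : ((∑ j ∈ Finset.Icc 1 M, Real.log j / j - (Real.log M) ^ 2 / 2 : ℝ) : ℂ) =
      ∑ n ∈ Finset.range M, Complex.log ((n : ℂ) + 1) / ((n : ℂ) + 1) -
        Complex.log M ^ 2 / 2 := by
    push_cast
    congr 1
    have : Finset.Icc 1 M = Finset.Ico (0 + 1) (M + 1) := by ext; simp
    rw [this, ← Finset.sum_Ico_add' (fun j : ℕ => Complex.log j / (j:ℂ)) 0 M 1,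
      Finset.range_eq_Ico]
    refine Finset.sum_congr rfl fun n _ => ?_
    push_cast; rfl
  rw [e1, Finset.sum_sub_distrib]
  simp only [Function.comp_apply]
  rw [Finset.sum_range_succ']
  have e2 : (z + ((M + 1 : ℕ) : ℂ)) = M + (z + 1) := by push_cast; ring
  have e3 : ∀ n : ℕ, (z + ((n + 1 : ℕ) : ℂ)) = (n:ℂ) + 1 + z := fun n => by push_cast; ring
  rw [e2]
  simp only [e3, Nat.cast_zero, add_zero]
  ring
end
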